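/- arXiv:2205.00494 — 10 statements merged into one kernel-verified Lean document; each statement's English description precedes it below -/
import Mathlib

section
/- Let A = Γ_θ − Γ̃, the upper triangular matrix with A_{ii} = 2θ + G/2 = Gλ and A_{ij} = G for j > i, where λ = 2θ/G + 1/2. Then A is invertible and its inverse B = A^{−1} is the upper triangular matrix with entries B_{ii} = 1/(Gλ), B_{ij} = −(λ−1)^{j−i−1}/(G·λ^{j−i+1}) for j > i, and B_{ij} = 0 for j < i. -/
open Matrix

/-!
If the partial sums of a row vector `v` are `s`, then the `k`-th entry of `v ᵥ* A`, where `A` has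
diagonal `a` and constant `c` above it, is `a * s (k + 1) - (a - c) * s k`. So the `i`-th row of a
left inverse is found from the first-order recursion `a * s (k + 1) = (a - c) * s k + δ_{ik}`,
whose solution is geometric with ratio `(a - c) / a` from `k = i + 1` on; the entries of the inverse
are the increments of this solution.
-/

section UpperConst

variable {ι R : Type*} [LinearOrder ι]

/-- The upper triangular matrix with diagonal entries `a` and every entry above the diagonal equal
to `c`; the matrix `Γ_θ - Γ̃` is the case `a = G * lam`, `c = G`. -/
def upperConst [Zero R] (a c : R) : Matrix ι ι R :=
  of fun i j => if i = j then a else if i < j then c else 0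

lemma vecMul_upperConst [Fintype ι] [LocallyFiniteOrderBot ι] [NonUnitalNonAssocSemiring R]
    (a c : R) (v : ι → R) (k : ι) :
    (v ᵥ* upperConst a c) k = (∑ j ∈ Finset.Iio k, v j) * c + v k * a := by
  have split_entry (j : ι) : v j * upperConst a c j k =
      (if j < k then v j * c else 0) + if j = k then v j * a else 0 := by
    rcases lt_trichotomy j k with h | rfl | h
    · simp [upperConst, h, h.ne]
    · simp [upperConst]
    · simp [upperConst, h.ne', h.not_gt]
  have filter_lt : Finset.univ.filter (· < k) = Finset.Iio k := by ext; simp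
  simp only [vecMul, dotProduct, split_entry, Finset.sum_add_distrib, ← Finset.sum_filter,
    filter_lt, Finset.sum_mul, Finset.filter_eq', Finset.mem_univ, if_true, Finset.sum_singleton]

end UpperConst

lemma sum_Iio_fin_sub {M : Type*} [AddCommGroup M] {n : ℕ} (s : ℕ → M) (k : Fin n) :
    ∑ j ∈ Finset.Iio k, (s (j + 1) - s j) = s k - s 0 := by
  rw [← Finset.sum_range_sub, ← Nat.Iio_eq_range, ← Fin.map_valEmbedding_Iio, Finset.sum_map]
  rfl

section Inverse

variable {K : Type*} [Field K] {n : ℕ}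

/-- The inverse of `upperConst a c` on `Fin n`, for `a ≠ 0`. The subtractions `j - i - 1` and
`j - i` are of natural numbers, and not truncated in the branch `i < j`. -/
def upperConstInv (a c : K) : Matrix (Fin n) (Fin n) K :=
  of fun i j => if i = j then a⁻¹
    else if i < j then -(c * (a - c) ^ (j.val - i.val - 1)) / a ^ (j.val - i.val + 1) else 0

/-- The sum of the entries of row `i` of `upperConstInv a c` over the columns `j < k`. -/
def upperConstInvRowSum (a c : K) (i k : ℕ) : K :=
  if i < k then (a - c) ^ (k - i - 1) / a ^ (k - i) else 0

lemma upperConstInvRowSum_of_le (a c : K) {i k : ℕ} (h : k ≤ i) :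
    upperConstInvRowSum a c i k = 0 :=
  if_neg h.not_gt

lemma upperConstInvRowSum_add_succ (a c : K) (i d : ℕ) :
    upperConstInvRowSum a c i (i + d + 1) = (a - c) ^ d / a ^ (d + 1) := by
  rw [upperConstInvRowSum, if_pos (by omega), show i + d + 1 - i = d + 1 by omega,
    Nat.add_sub_cancel]

lemma mul_upperConstInvRowSum_succ {a : K} (ha : a ≠ 0) (c : K) (i k : ℕ) :
    a * upperConstInvRowSum a c i (k + 1) =
      (a - c) * upperConstInvRowSum a c i k + if i = k then 1 else 0 := by
  rcases lt_trichotomy i k with h | rfl | h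
  · obtain ⟨d, rfl⟩ := Nat.exists_eq_add_of_lt h
    rw [add_assoc i d 1, upperConstInvRowSum_add_succ, ← add_assoc, upperConstInvRowSum_add_succ,
      if_neg (by omega)]
    field_simp
    ring
  · rw [upperConstInvRowSum_of_le a c le_rfl, upperConstInvRowSum_add_succ a c i 0]
    simp [ha]
  · simp [upperConstInvRowSum_of_le, h.le, h.ne', Nat.succ_le_of_lt h]

lemma upperConstInv_apply_eq_rowSum_sub {a : K} (ha : a ≠ 0) (c : K) (i j : Fin n) :
    upperConstInv a c i j = upperConstInvRowSum a c i (j + 1) - upperConstInvRowSum a c i j := by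
  simp only [upperConstInv, of_apply, Fin.ext_iff, Fin.lt_def]
  generalize i.val = i, j.val = j
  rcases lt_trichotomy i j with h | rfl | h
  · obtain ⟨d, rfl⟩ := Nat.exists_eq_add_of_lt h
    rw [if_neg h.ne, if_pos h, upperConstInvRowSum_add_succ, add_assoc i d 1,
      upperConstInvRowSum_add_succ, Nat.add_sub_cancel_left, Nat.add_sub_cancel]
    field_simp
    ring
  · rw [upperConstInvRowSum_of_le a c le_rfl, upperConstInvRowSum_add_succ a c i 0]
    simp
  · simp [upperConstInvRowSum_of_le, h.le, h.ne', h.not_gt, Nat.succ_le_of_lt h]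

theorem upperConstInv_mul_upperConst {a : K} (ha : a ≠ 0) (c : K) :
    upperConstInv a c * upperConst a c = (1 : Matrix (Fin n) (Fin n) K) := by
  ext i k
  set s := upperConstInvRowSum a c i
  have row_eq : upperConstInv a c i = fun j : Fin n => s (j + 1) - s j :=
    funext (upperConstInv_apply_eq_rowSum_sub ha c i)
  calc (upperConstInv a c * upperConst a c : Matrix (Fin n) (Fin n) K) i k
      = (upperConstInv a c i ᵥ* upperConst a c) k := by rw [mul_apply_eq_vecMul]
    _ = (s k - s 0) * c + (s (k + 1) - s k) * a := by
      rw [row_eq, vecMul_upperConst, sum_Iio_fin_sub]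
    _ = a * s (k + 1) - (a - c) * s k := by
      rw [show s 0 = 0 from upperConstInvRowSum_of_le a c (Nat.zero_le _)]
      ring
    _ = (1 : Matrix (Fin n) (Fin n) K) i k := by
      simp only [s, mul_upperConstInvRowSum_succ ha, one_apply, add_sub_cancel_left, Fin.ext_iff]

lemma upperConstInv_scaled_apply {G : K} (hG : G ≠ 0) (lam : K) (i j : Fin n) :
    upperConstInv (G * lam) G i j =
      if i = j then 1 / (G * lam)
      else if i < j then -((lam - 1) ^ (j.val - i.val - 1)) / (G * lam ^ (j.val - i.val + 1))
      else 0 := by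
  rw [upperConstInv, of_apply, inv_eq_one_div]
  split_ifs with h_eq h_lt
  · rfl
  · obtain ⟨d, hd⟩ := Nat.exists_eq_add_of_lt (Fin.lt_def.mp h_lt)
    rw [show j.val - i.val = d + 1 by omega, Nat.add_sub_cancel,
      show G * lam - G = G * (lam - 1) by ring, mul_pow, mul_pow]
    field_simp
    ring
  · rfl

theorem stmt_1_general {G θ lam : K} (hG : G ≠ 0) (hlam₀ : lam ≠ 0) (hlam : lam = 2 * θ / G + 1 / 2)
    {A B : Matrix (Fin n) (Fin n) K}
    (hA : ∀ i j : Fin n, A i j = if i = j then 2 * θ + G / 2 else if i < j then G else 0)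
    (hB : ∀ i j : Fin n, B i j =
      if i = j then 1 / (G * lam)
      else if i < j then -((lam - 1) ^ (j.val - i.val - 1)) / (G * lam ^ (j.val - i.val + 1))
      else 0) :
    IsUnit A ∧ A⁻¹ = B := by
  have diag_eq : 2 * θ + G / 2 = G * lam := by
    rw [hlam, mul_add, mul_div_cancel₀ _ hG, mul_one_div]
  have A_eq : A = upperConst (G * lam) G := by
    ext i j
    rw [hA, diag_eq, upperConst, of_apply]
  have B_eq : B = upperConstInv (G * lam) G := by
    ext i j
    rw [hB, upperConstInv_scaled_apply hG]
  have B_mul_A : B * A = 1 := by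
    rw [A_eq, B_eq, upperConstInv_mul_upperConst (mul_ne_zero hG hlam₀)]
  exact ⟨.of_mul_eq_one_right B B_mul_A, inv_eq_left_inv B_mul_A⟩

end Inverse

/-- Let `A = Γ_θ − Γ̃` be the upper triangular matrix with `A_{ii} = 2θ + G/2 = Gλ`
and `A_{ij} = G` for `j > i`, where `λ = 2θ/G + 1/2`. Then `A` is invertible and its
inverse `B = A⁻¹` is upper triangular with `B_{ii} = 1/(Gλ)`,
`B_{ij} = −(λ−1)^{j−i−1}/(G·λ^{j−i+1})` for `j > i`, and `B_{ij} = 0` for `j < i`. -/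
theorem stmt_1 (N : ℕ) (hN : 1 ≤ N) (G θ : ℝ) (hG : 0 < G) (hθ : 0 < θ)
    (lam : ℝ) (hlam : lam = 2*θ/G + 1/2)
    (A B : Matrix (Fin (N+1)) (Fin (N+1)) ℝ)
    (hA : ∀ i j : Fin (N+1), A i j =
      if i = j then 2*θ + G/2 else if i < j then G else 0)
    (hB : ∀ i j : Fin (N+1), B i j =
      if i = j then 1/(G*lam)
      else if i < j then -((lam - 1)^(j.val - i.val - 1)) / (G * lam^(j.val - i.val + 1))
      else 0) :
    IsUnit A ∧ A⁻¹ = B := by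
  have hlam₀ : lam ≠ 0 := by rw [hlam]; positivity
  exact stmt_1_general hG.ne' hlam₀ hlam hA hB
end

section
/- Let A = Γ_θ − Γ̃. Then 1 + G·eᵀA^{−T}e ≠ 0, the matrix Γ_θ + Γ̃ is invertible, and its inverse satisfies the Sherman–Morrison identity (Γ_θ + Γ̃)^{−1} = A^{−T} − G·(A^{−T}e·eᵀA^{−T})/(1 + G·eᵀA^{−T}e), where A^{−T} denotes the inverse of the transpose of A. -/
open Matrix

/-!
If `Γ̃ + Γ̃ᵀ = G·eeᵀ`, then `Aᵀ = Γ̃ + 2θI`, and the quadratic form of `Γ̃` is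
`v ↦ G(e·v)²/2 ≥ 0`. So the form of `Aᵀ` is positive definite for `θ > 0`, which makes `Aᵀ`
invertible, and substituting `e = Aᵀw` gives `eᵀA^{−T}e = wᵀAᵀw ≥ 0`. The denominator
`1 + G·eᵀA^{−T}e` is therefore at least `1`, and the Woodbury identity applies to the rank-one
update `Γ_θ + Γ̃ = Aᵀ + G·eeᵀ`.
-/

section RankOneUpdate

variable {n R K : Type*} [Fintype n]

theorem one_add_replicateRow_mul_mul_replicateCol [CommSemiring R] (B : Matrix n n R) (c : R)
    (u v : n → R) :
    1 + replicateRow Unit v * B * replicateCol Unit (c • u) =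
      (1 + c * (v ⬝ᵥ (B *ᵥ u))) • (1 : Matrix Unit Unit R) := by
  rw [Matrix.mul_assoc, ← replicateCol_mulVec, mulVec_smul]
  ext
  simp

variable [DecidableEq n] [Field K] {B : Matrix n n K} {c : K} {u v : n → K}

theorem isUnit_add_smul_vecMulVec (hB : IsUnit B) (h : 1 + c * (v ⬝ᵥ (B⁻¹ *ᵥ u)) ≠ 0) :
    IsUnit (B + c • vecMulVec u v) := by
  have hdet : IsUnit B.det := (isUnit_iff_isUnit_det B).mp hB
  rw [isUnit_iff_isUnit_det, ← smul_vecMulVec, vecMulVec_eq Unit,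
    det_add_replicateCol_mul_replicateRow hdet, one_add_replicateRow_mul_mul_replicateCol]
  simpa using ⟨hdet.ne_zero, h⟩

theorem inv_add_smul_vecMulVec (hB : IsUnit B) (h : 1 + c * (v ⬝ᵥ (B⁻¹ *ᵥ u)) ≠ 0) :
    (B + c • vecMulVec u v)⁻¹ =
      B⁻¹ - (c / (1 + c * (v ⬝ᵥ (B⁻¹ *ᵥ u)))) • vecMulVec (B⁻¹ *ᵥ u) (v ᵥ* B⁻¹) := by
  have hcap : (1 : Matrix Unit Unit K)⁻¹ + replicateRow Unit v * B⁻¹ * replicateCol Unit (c • u) =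
      (1 + c * (v ⬝ᵥ (B⁻¹ *ᵥ u))) • 1 := by
    rw [inv_one, one_add_replicateRow_mul_mul_replicateCol]
  generalize 1 + c * (v ⬝ᵥ (B⁻¹ *ᵥ u)) = d at h hcap ⊢
  have hcap_inv : (d • (1 : Matrix Unit Unit K))⁻¹ = d⁻¹ • 1 := inv_eq_right_inv (by simp [h])
  have hcap_unit : IsUnit (d • (1 : Matrix Unit Unit K)) := by
    simpa [isUnit_iff_isUnit_det] using h
  have woodbury := add_mul_mul_inv_eq_sub B (replicateCol Unit (c • u)) 1 (replicateRow Unit v)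
    hB isUnit_one (hcap ▸ hcap_unit)
  rw [hcap, hcap_inv, Matrix.mul_one, ← vecMulVec_eq, smul_vecMulVec] at woodbury
  rw [woodbury, Matrix.mul_smul, Matrix.mul_one, Matrix.smul_mul, Matrix.smul_mul, Matrix.mul_assoc,
    Matrix.mul_assoc, ← Matrix.mul_assoc (replicateCol _ _), ← vecMulVec_eq, vecMulVec_mul,
    mul_vecMulVec, mulVec_smul, smul_vecMulVec, smul_smul, div_eq_inv_mul]

end RankOneUpdate

section QuadraticForm

variable {n R K : Type*} [Fintype n]

theorem two_mul_dotProduct_mulVec_self [CommSemiring R] (M : Matrix n n R) (v : n → R) :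
    2 * (v ⬝ᵥ (M *ᵥ v)) = v ⬝ᵥ ((M + Mᵀ) *ᵥ v) := by
  rw [add_mulVec, dotProduct_add, dotProduct_transpose_mulVec, two_mul]

theorem dotProduct_inv_mulVec_nonneg [DecidableEq n] [CommRing R] [Preorder R] {M : Matrix n n R}
    (hM : ∀ v, 0 ≤ v ⬝ᵥ (M *ᵥ v)) (u : n → R) : 0 ≤ u ⬝ᵥ (M⁻¹ *ᵥ u) := by
  by_cases hdet : IsUnit M.det
  · have hu : M *ᵥ (M⁻¹ *ᵥ u) = u := by rw [mulVec_mulVec, mul_nonsing_inv M hdet, one_mulVec]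
    simpa only [hu, dotProduct_comm] using hM (M⁻¹ *ᵥ u)
  · simp [nonsing_inv_apply_not_isUnit M hdet]

theorem isUnit_of_dotProduct_mulVec_pos [DecidableEq n] [Field K] [Preorder K] {M : Matrix n n K}
    (hM : ∀ v ≠ 0, 0 < v ⬝ᵥ (M *ᵥ v)) : IsUnit M := by
  refine mulVec_injective_iff_isUnit.mp <|
    (injective_iff_map_eq_zero M.mulVecLin).mpr fun v hv => ?_
  by_contra hne
  have hv' : M *ᵥ v = 0 := hv
  simpa [hv'] using hM v hne

variable [CommRing R] [LinearOrder R] [IsStrictOrderedRing R] {M : Matrix n n R}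

theorem dotProduct_mulVec_nonneg_of_add_transpose_eq {c : R} (hc : 0 ≤ c) {u : n → R}
    (hM : M + Mᵀ = c • vecMulVec u u) (v : n → R) : 0 ≤ v ⬝ᵥ (M *ᵥ v) := by
  have hsq : 2 * (v ⬝ᵥ (M *ᵥ v)) = c * (u ⬝ᵥ v) ^ 2 := by
    rw [two_mul_dotProduct_mulVec_self, hM, smul_mulVec, vecMulVec_mulVec, dotProduct_smul,
      dotProduct_smul, dotProduct_comm v u, op_smul_eq_smul, smul_eq_mul, smul_eq_mul, sq]
  have : 0 ≤ c * (u ⬝ᵥ v) ^ 2 := by positivity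
  linarith

theorem dotProduct_add_smul_one_mulVec_pos [DecidableEq n] (hM : ∀ v, 0 ≤ v ⬝ᵥ (M *ᵥ v)) {t : R}
    (ht : 0 < t) {v : n → R} (hv : v ≠ 0) : 0 < v ⬝ᵥ ((M + t • 1) *ᵥ v) := by
  have hvv : 0 < v ⬝ᵥ v :=
    (Finset.sum_nonneg fun i _ => mul_self_nonneg (v i)).lt_of_ne'
      (dotProduct_self_eq_zero.not.mpr hv)
  rw [add_mulVec, smul_mulVec, one_mulVec, dotProduct_add, dotProduct_smul, smul_eq_mul]
  exact add_pos_of_nonneg_of_pos (hM v) (mul_pos ht hvv)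

end QuadraticForm

theorem add_transpose_eq_of_apply_eq_ite {n K : Type*} [LinearOrder n] [Field K] [NeZero (2 : K)]
    {L : Matrix n n K} {c : K}
    (hL : ∀ i j, L i j = if j < i then c else if i = j then c / 2 else 0) :
    L + Lᵀ = c • vecMulVec 1 1 := by
  ext i j
  rcases lt_trichotomy i j with hij | rfl | hij
  · simp [hL, hij, hij.ne, hij.not_gt]
  · simp [hL]
  · simp [hL, hij, hij.ne, hij.not_gt]

theorem stmt_2_general {n K : Type*} [Fintype n] [DecidableEq n] [Field K] [LinearOrder K]
    [IsStrictOrderedRing K] {G θ : K} (hG : 0 ≤ G) (hθ : 0 < θ) {Γ Γθ Γt A : Matrix n n K}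
    {e : n → K} (hΓ : Γ = G • vecMulVec e e) (hΓθ : Γθ = Γ + (2 * θ) • (1 : Matrix n n K))
    (hΓt : Γt + Γtᵀ = Γ) (hA : A = Γθ - Γt) :
    1 + G * (e ⬝ᵥ ((Aᵀ)⁻¹ *ᵥ e)) ≠ 0 ∧
    IsUnit (Γθ + Γt) ∧
    (Γθ + Γt)⁻¹ = (Aᵀ)⁻¹ -
      (G / (1 + G * (e ⬝ᵥ ((Aᵀ)⁻¹ *ᵥ e)))) • vecMulVec ((Aᵀ)⁻¹ *ᵥ e) (e ᵥ* (Aᵀ)⁻¹) := by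
  have hAt : Aᵀ = Γt + (2 * θ) • 1 := by
    rw [hA, hΓθ, ← hΓt]
    simp only [transpose_sub, transpose_add, transpose_smul, transpose_one, transpose_transpose]
    abel
  have hsum : Γθ + Γt = Aᵀ + G • vecMulVec e e := by
    rw [hAt, hΓθ, ← hΓ]
    abel
  have hAt_pos : ∀ v ≠ 0, 0 < v ⬝ᵥ (Aᵀ *ᵥ v) := fun v hv =>
    hAt ▸ dotProduct_add_smul_one_mulVec_pos
      (dotProduct_mulVec_nonneg_of_add_transpose_eq hG (hΓt.trans hΓ)) (by positivity) hv
  have hAt_nonneg (v : n → K) : 0 ≤ v ⬝ᵥ (Aᵀ *ᵥ v) := by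
    obtain rfl | hv := eq_or_ne v 0
    · simp
    · exact (hAt_pos v hv).le
  have hunit : IsUnit Aᵀ := isUnit_of_dotProduct_mulVec_pos hAt_pos
  have hne : 1 + G * (e ⬝ᵥ ((Aᵀ)⁻¹ *ᵥ e)) ≠ 0 := by
    have hinv_nonneg := dotProduct_inv_mulVec_nonneg hAt_nonneg e
    positivity
  rw [hsum]
  exact ⟨hne, isUnit_add_smul_vecMulVec hunit hne, inv_add_smul_vecMulVec hunit hne⟩

/-- Sherman–Morrison identity for `Γ_θ + Γ̃ = Aᵀ + G·eeᵀ` with `A = Γ_θ − Γ̃`: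
`1 + G·eᵀA^{−T}e ≠ 0`, the matrix `Γ_θ + Γ̃` is invertible, and
`(Γ_θ + Γ̃)⁻¹ = A^{−T} − G·(A^{−T}e·eᵀA^{−T})/(1 + G·eᵀA^{−T}e)`. -/
theorem stmt_2 (N : ℕ) (hN : 1 ≤ N) (G θ : ℝ) (hG : 0 < G) (hθ : 0 < θ)
    (Γ Γθ Γt A : Matrix (Fin (N+1)) (Fin (N+1)) ℝ)
    (hΓ : ∀ i j : Fin (N+1), Γ i j = G)
    (hΓθ : Γθ = Γ + (2*θ) • (1 : Matrix (Fin (N+1)) (Fin (N+1)) ℝ))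
    (hΓt : ∀ i j : Fin (N+1), Γt i j = if j < i then G else if i = j then G/2 else 0)
    (hA : A = Γθ - Γt)
    (e : Fin (N+1) → ℝ) (he : e = fun _ => 1) :
    1 + G * (e ⬝ᵥ ((Aᵀ)⁻¹ *ᵥ e)) ≠ 0 ∧
    IsUnit (Γθ + Γt) ∧
    (Γθ + Γt)⁻¹ = (Aᵀ)⁻¹ -
      (G / (1 + G * (e ⬝ᵥ ((Aᵀ)⁻¹ *ᵥ e)))) •
        Matrix.vecMulVec ((Aᵀ)⁻¹ *ᵥ e) (Matrix.vecMul e (Aᵀ)⁻¹) := by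
  have hΓe : Γ = G • vecMulVec e e := by
    ext i j
    simp [hΓ, he, vecMulVec_apply]
  refine stmt_2_general hG.le hθ hΓe hΓθ ?_ hA
  rw [hΓe, he]
  exact add_transpose_eq_of_apply_eq_ite hΓt
end

section
/- The fundamental solutions v and w of the Schied–Zhang market impact game with constant kernel G are equal up to time reversal: v_k = w_{N+2−k} for every k = 1, 2, …, N+1. -/
open Matrix

/-!
Let `J` be the lower triangular kernel `Γ̃` and `C = J + 2θI`. Since `J + Jᵀ = Γ` and reversing time
transposes `J`, the matrix `Γ_θ - J = Cᵀ` is the time reversal of `C`, while `Γ_θ + J = C + Γ`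
perturbs `C` by a multiple of `e eᵀ`. Adding a matrix of the form `e uᵀ` to `C` only rescales the
solution `x` of `C x = e`, and the rescaling is lost in the normalization. Both matrices are
invertible because the quadratic form of `J` is `x ↦ G (∑ xᵢ)² / 2 ≥ 0`.
-/

section Normalization

variable {ι κ K : Type*} [Fintype ι] [DecidableEq ι] [Fintype κ] [DecidableEq κ] [Field K]

/-- The multiple `x` of `A⁻¹ e` normalized so that `e ⬝ᵥ x = 1`. The fundamental solutions `v` and
`w` are the cases `A = Γ_θ + Γ̃` and `A = Γ_θ - Γ̃`, with `e` the all-ones vector. The value is `0`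
if `A` is singular or `e ⬝ᵥ A⁻¹ e = 0`. -/
noncomputable def fundamentalSolution (A : Matrix ι ι K) (e : ι → K) : ι → K :=
  (e ⬝ᵥ (A⁻¹ *ᵥ e))⁻¹ • (A⁻¹ *ᵥ e)

theorem fundamentalSolution_eq_of_mulVec_eq_smul {A : Matrix ι ι K} (hA : IsUnit A)
    {e x : ι → K} {c : K} (hc : c ≠ 0) (h : A *ᵥ x = c • e) :
    fundamentalSolution A e = (e ⬝ᵥ x)⁻¹ • x := by
  have hinv : A⁻¹ *ᵥ e = c⁻¹ • x := by
    let _ := hA.invertible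
    exact inv_mulVec_eq_vec (by rw [mulVec_smul, h, inv_smul_smul₀ hc])
  rw [fundamentalSolution, hinv, dotProduct_smul, smul_smul, smul_eq_mul, mul_inv, inv_inv,
    mul_right_comm, mul_inv_cancel₀ hc, one_mul]

theorem fundamentalSolution_add_vecMulVec {A : Matrix ι ι K} {e u : ι → K} (hA : IsUnit A)
    (hAu : IsUnit (A + vecMulVec e u)) :
    fundamentalSolution (A + vecMulVec e u) e = fundamentalSolution A e := by
  set x := A⁻¹ *ᵥ e
  have hAx : A *ᵥ x = e := by
    rw [mulVec_mulVec, mul_nonsing_inv A ((isUnit_iff_isUnit_det A).mp hA), one_mulVec]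
  have hAux : (A + vecMulVec e u) *ᵥ x = (1 + u ⬝ᵥ x) • e := by
    simp [add_mulVec, vecMulVec_mulVec, hAx, add_smul]
  have hne : 1 + u ⬝ᵥ x ≠ 0 := by
    intro h0
    have hx0 : x = 0 := mulVec_injective_of_isUnit hAu (by rw [hAux, h0, zero_smul, mulVec_zero])
    simp [hx0] at h0
  exact fundamentalSolution_eq_of_mulVec_eq_smul hAu hne hAux

theorem fundamentalSolution_submatrix_equiv (A : Matrix κ κ K) (e : κ → K) (σ : ι ≃ κ) :
    fundamentalSolution (A.submatrix σ σ) (e ∘ σ) = fundamentalSolution A e ∘ σ := by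
  have hinv : (A.submatrix σ σ)⁻¹ *ᵥ (e ∘ σ) = (A⁻¹ *ᵥ e) ∘ σ := by
    simp [inv_submatrix_equiv, submatrix_mulVec_equiv, Function.comp_assoc]
  rw [fundamentalSolution, hinv, comp_equiv_dotProduct_comp_equiv]
  rfl

end Normalization

theorem isUnit_add_smul_one_of_dotProduct_mulVec_nonneg {ι K : Type*} [Fintype ι] [DecidableEq ι]
    [Field K] [LinearOrder K] [IsStrictOrderedRing K] {A : Matrix ι ι K}
    (hA : ∀ x, 0 ≤ x ⬝ᵥ (A *ᵥ x)) {a : K} (ha : 0 < a) : IsUnit (A + a • 1) := by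
  rw [isUnit_iff_isUnit_det, isUnit_iff_ne_zero]
  intro hdet
  obtain ⟨x, hx, hker⟩ := exists_mulVec_eq_zero_iff.mpr hdet
  have hform : x ⬝ᵥ (A *ᵥ x) + a * (x ⬝ᵥ x) = 0 := by
    simpa [add_mulVec, smul_mulVec, dotProduct_add] using congrArg (x ⬝ᵥ ·) hker
  have hxx : 0 < x ⬝ᵥ x :=
    (Finset.sum_nonneg fun i _ => mul_self_nonneg (x i)).lt_of_ne'
      (dotProduct_self_eq_zero.not.mpr hx)
  linarith [hA x, mul_pos ha hxx]

section Kernels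

variable {ι K : Type*}

/-- The constant impact kernel `Γ`. -/
def constantKernel (G : K) : Matrix ι ι K :=
  of fun _ _ => G

variable [Field K]

/-- The kernel `Γ̃`: the lower triangular part of the constant kernel, with half its diagonal. -/
def lowerKernel [LinearOrder ι] (G : K) : Matrix ι ι K :=
  of fun i j => if j < i then G else if i = j then G / 2 else 0

theorem constantKernel_eq_vecMulVec (G : K) :
    (constantKernel G : Matrix ι ι K) = vecMulVec 1 (fun _ => G) := by
  ext
  simp [constantKernel, vecMulVec_apply]

theorem lowerKernel_add_transpose [LinearOrder ι] [NeZero (2 : K)] (G : K) :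
    lowerKernel G + (lowerKernel G)ᵀ = (constantKernel G : Matrix ι ι K) := by
  ext i j
  rcases lt_trichotomy i j with h | rfl | h
  · simp [lowerKernel, constantKernel, h, h.ne, h.not_gt]
  · simp [lowerKernel, constantKernel]
  · simp [lowerKernel, constantKernel, h, h.ne, h.not_gt]

theorem lowerKernel_submatrix_of_strictAnti [LinearOrder ι] (G : K) {σ : ι → ι}
    (hσ : StrictAnti σ) :
    (lowerKernel G).submatrix σ σ = (lowerKernel G)ᵀ := by
  ext i j
  simp [lowerKernel, hσ.lt_iff_gt, hσ.injective.eq_iff, eq_comm]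

theorem lowerKernel_add_smul_one_submatrix_of_strictAnti [LinearOrder ι] [NeZero (2 : K)]
    (G a : K) {σ : ι → ι} (hσ : StrictAnti σ) :
    (lowerKernel G + a • 1).submatrix σ σ = constantKernel G + a • 1 - lowerKernel G := by
  have hshift : (lowerKernel G + a • 1).submatrix σ σ = (lowerKernel G)ᵀ + a • 1 := by
    simp only [submatrix_add, Pi.add_apply, submatrix_smul, Pi.smul_apply,
      lowerKernel_submatrix_of_strictAnti G hσ, submatrix_one σ hσ.injective]
  rw [hshift, ← lowerKernel_add_transpose]
  abel

variable [Fintype ι] [LinearOrder K] [IsStrictOrderedRing K]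

theorem dotProduct_constantKernel_mulVec_nonneg {G : K} (hG : 0 ≤ G) (x : ι → K) :
    0 ≤ x ⬝ᵥ (constantKernel G *ᵥ x) := by
  have hform : x ⬝ᵥ (constantKernel G *ᵥ x) = G * (∑ i, x i) ^ 2 := by
    simp only [constantKernel, mulVec, dotProduct, of_apply, ← Finset.mul_sum, ← Finset.sum_mul]
    ring
  rw [hform]
  positivity

theorem dotProduct_lowerKernel_mulVec_nonneg [LinearOrder ι] {G : K} (hG : 0 ≤ G) (x : ι → K) :
    0 ≤ x ⬝ᵥ (lowerKernel G *ᵥ x) := by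
  have h := dotProduct_constantKernel_mulVec_nonneg hG x
  rw [← lowerKernel_add_transpose, add_mulVec, dotProduct_add, dotProduct_transpose_mulVec] at h
  linarith

variable [LinearOrder ι] {G a : K}

theorem isUnit_lowerKernel_add_smul_one (hG : 0 ≤ G) (ha : 0 < a) :
    IsUnit (lowerKernel G + a • 1 : Matrix ι ι K) :=
  isUnit_add_smul_one_of_dotProduct_mulVec_nonneg (dotProduct_lowerKernel_mulVec_nonneg hG) ha

theorem isUnit_lowerKernel_add_smul_one_add_constantKernel (hG : 0 ≤ G) (ha : 0 < a) :
    IsUnit (lowerKernel G + a • 1 + constantKernel G : Matrix ι ι K) := by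
  rw [add_right_comm]
  refine isUnit_add_smul_one_of_dotProduct_mulVec_nonneg (fun x => ?_) ha
  rw [add_mulVec, dotProduct_add]
  exact add_nonneg (dotProduct_lowerKernel_mulVec_nonneg hG x)
    (dotProduct_constantKernel_mulVec_nonneg hG x)

end Kernels

theorem stmt_4_general {n : ℕ} {K : Type*} [Field K] [LinearOrder K] [IsStrictOrderedRing K]
    {G θ : K} (hG : 0 ≤ G) (hθ : 0 < θ) (k : Fin n) :
    fundamentalSolution (constantKernel G + (2 * θ) • 1 + lowerKernel G) 1 k =
      fundamentalSolution (constantKernel G + (2 * θ) • 1 - lowerKernel G) 1 k.rev := by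
  have h2θ : 0 < 2 * θ := by positivity
  set C : Matrix (Fin n) (Fin n) K := lowerKernel G + (2 * θ) • 1 with hC
  have hplus : constantKernel G + (2 * θ) • 1 + lowerKernel G = C + constantKernel G := by
    rw [hC]; abel
  have hminus : C.submatrix Fin.revPerm Fin.revPerm =
      constantKernel G + (2 * θ) • 1 - lowerKernel G :=
    lowerKernel_add_smul_one_submatrix_of_strictAnti G (2 * θ) Fin.rev_strictAnti
  have hunit : IsUnit (C + constantKernel G) :=
    isUnit_lowerKernel_add_smul_one_add_constantKernel hG h2θ
  have hreverse := fundamentalSolution_submatrix_equiv C 1 Fin.revPerm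
  rw [constantKernel_eq_vecMulVec] at hunit
  rw [hplus, ← hminus, constantKernel_eq_vecMulVec,
    fundamentalSolution_add_vecMulVec (isUnit_lowerKernel_add_smul_one hG h2θ) hunit]
  simpa using (congrFun hreverse k.rev).symm

/-- The fundamental solutions `v` and `w` of the Schied–Zhang market impact game with
constant kernel `G` are equal up to time reversal: `v_k = w_{N+2−k}` for `k = 1,…,N+1`
(in 0-based `Fin (N+1)` indexing: `v i = w i.rev`). -/
theorem stmt_4 (N : ℕ) (hN : 1 ≤ N) (G θ : ℝ) (hG : 0 < G) (hθ : 0 < θ)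
    (Γ Γθ Γt : Matrix (Fin (N+1)) (Fin (N+1)) ℝ)
    (hΓ : ∀ i j : Fin (N+1), Γ i j = G)
    (hΓθ : Γθ = Γ + (2*θ) • (1 : Matrix (Fin (N+1)) (Fin (N+1)) ℝ))
    (hΓt : ∀ i j : Fin (N+1), Γt i j = if j < i then G else if i = j then G/2 else 0)
    (e : Fin (N+1) → ℝ) (he : e = fun _ => 1)
    (v w : Fin (N+1) → ℝ)
    (hv : v = (e ⬝ᵥ ((Γθ + Γt)⁻¹ *ᵥ e))⁻¹ • ((Γθ + Γt)⁻¹ *ᵥ e))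
    (hw : w = (e ⬝ᵥ ((Γθ - Γt)⁻¹ *ᵥ e))⁻¹ • ((Γθ - Γt)⁻¹ *ᵥ e)) :
    ∀ k : Fin (N+1), v k = w k.rev := by
  obtain ⟨rfl, rfl⟩ : Γ = constantKernel G ∧ Γt = lowerKernel G := ⟨ext hΓ, ext hΓt⟩
  subst hΓθ he hv hw
  exact stmt_4_general hG.le hθ
end

section
/- If θ > G/4 and X > 0, then the directional trader's Nash-equilibrium schedule ξ has a U-shape: (i) ξ_k = ξ_{N+2−k} for all k = 1,…,N+1 (time symmetry); (ii) ξ_k > 0 for all k (positivity); (iii) ξ_k > ξ_{k+1} for every integer k with 1 ≤ k < (N+1)/2 (strict decrease in the first ⌊(N+1)/2⌋ components); and (iv) ξ_{k−1} − 2ξ_k + ξ_{k+1} > 0 for every integer k with 2 ≤ k ≤ N (strict convexity). -/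
/-!
Since `1 - a = 1 / λ`, the normalisation `λ (1 - a ^ (N + 1))` is the geometric sum
`1 + a + ⋯ + a ^ N`, which is positive as soon as `a > 0`. So `ξ` is a positive multiple of
`i ↦ a ^ i + a ^ (N - i)` with `i = k - 1`, and its differences factor: the first decrement is
`a ^ i (1 - a) (1 - a ^ d)` with `d = N - 2 i - 1`, where `1 - a` divides `1 - a ^ d` with a
positive quotient, and the second difference is `(1 - a) ^ 2` times a sum of two powers of `a`.
-/

section SymmetrizedPow

variable {R : Type*}

/-- The symmetrised geometric sequence, the sum of `a ^ i` and of its reflection `a ^ (n - i)`: the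
shape of the equilibrium schedule up to normalisation, with trading times numbered from `0` to `n`.
It is meaningful for `i ≤ n`, as the subtraction is truncated. -/
def symmetrizedPow [Semiring R] (a : R) (n i : ℕ) : R :=
  a ^ i + a ^ (n - i)

theorem symmetrizedPow_reflect [Semiring R] (a : R) {n i : ℕ} (hi : i ≤ n) :
    symmetrizedPow a n (n - i) = symmetrizedPow a n i := by
  rw [symmetrizedPow, symmetrizedPow, Nat.sub_sub_self hi, add_comm]

theorem symmetrizedPow_pos [Semiring R] [PartialOrder R] [IsStrictOrderedRing R] {a : R}
    (ha : 0 < a) (n i : ℕ) : 0 < symmetrizedPow a n i :=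
  add_pos (pow_pos ha _) (pow_pos ha _)

theorem symmetrizedPow_sub_symmetrizedPow_succ [CommRing R] (a : R) (i d : ℕ) :
    symmetrizedPow a (2 * i + d + 1) i - symmetrizedPow a (2 * i + d + 1) (i + 1) =
      a ^ i * ((1 - a) ^ 2 * ∑ j ∈ Finset.range d, a ^ j) := by
  have hi : 2 * i + d + 1 - i = i + d + 1 := by omega
  have hi_succ : 2 * i + d + 1 - (i + 1) = i + d := by omega
  rw [sq, mul_assoc, mul_neg_geom_sum, symmetrizedPow, symmetrizedPow, hi, hi_succ]
  ring

theorem symmetrizedPow_second_difference [CommRing R] (a : R) (i m : ℕ) :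
    symmetrizedPow a (i + m + 2) i - 2 * symmetrizedPow a (i + m + 2) (i + 1) +
      symmetrizedPow a (i + m + 2) (i + 2) = (1 - a) ^ 2 * (a ^ i + a ^ m) := by
  have hi : i + m + 2 - i = m + 2 := by omega
  have hi_succ : i + m + 2 - (i + 1) = m + 1 := by omega
  have hi_succ_succ : i + m + 2 - (i + 2) = m := by omega
  simp only [symmetrizedPow, hi, hi_succ, hi_succ_succ]
  ring

variable [CommRing R] [LinearOrder R] [IsStrictOrderedRing R] {a : R}

theorem symmetrizedPow_succ_lt (ha : 0 < a) (ha_ne : a ≠ 1) {n i : ℕ} (hi : 2 * i + 1 < n) :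
    symmetrizedPow a n (i + 1) < symmetrizedPow a n i := by
  obtain ⟨d, rfl⟩ : ∃ d, n = 2 * i + d + 1 := ⟨n - (2 * i + 1), by omega⟩
  rw [← sub_pos, symmetrizedPow_sub_symmetrizedPow_succ]
  exact mul_pos (pow_pos ha i) (mul_pos (sq_pos_of_ne_zero (sub_ne_zero.2 ha_ne.symm))
    (geom_sum_pos ha.le (by omega)))

theorem symmetrizedPow_second_difference_pos (ha : 0 < a) (ha_ne : a ≠ 1) {n i : ℕ}
    (hi : i + 2 ≤ n) :
    0 < symmetrizedPow a n i - 2 * symmetrizedPow a n (i + 1) + symmetrizedPow a n (i + 2) := by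
  obtain ⟨m, rfl⟩ : ∃ m, n = i + m + 2 := ⟨n - (i + 2), by omega⟩
  rw [symmetrizedPow_second_difference]
  exact mul_pos (sq_pos_of_ne_zero (sub_ne_zero.2 ha_ne.symm))
    (add_pos (pow_pos ha i) (pow_pos ha m))

end SymmetrizedPow

section Parameters

variable {K : Type*}

theorem mul_one_sub_one_sub_one_div_pow [DivisionRing K] {x : K} (hx : x ≠ 0) (n : ℕ) :
    x * (1 - (1 - 1 / x) ^ n) = ∑ i ∈ Finset.range n, (1 - 1 / x) ^ i := by
  rw [← mul_neg_geom_sum, sub_sub_cancel, ← mul_assoc, mul_one_div_cancel hx, one_mul]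

variable [Field K] [LinearOrder K] [IsStrictOrderedRing K]

theorem one_sub_one_div_pos {x : K} (hx : x < 0 ∨ 1 < x) : 0 < 1 - 1 / x := by
  rw [sub_pos, one_div, inv_lt_one_iff₀]
  exact hx.imp_left le_of_lt

theorem two_mul_div_add_half_neg_or_one_lt {G θ : K} (hG : G ≠ 0) (hθ : |G| / 4 < |θ|) :
    2 * θ / G + 1 / 2 < 0 ∨ 1 < 2 * θ / G + 1 / 2 := by
  have hratio : 1 / 4 < |θ / G| := by
    rw [abs_div, lt_div_iff₀ (abs_pos.2 hG)]
    linarith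
  rw [mul_div_assoc]
  rcases lt_abs.1 hratio with hpos | hneg
  · right; linarith
  · left; linarith

end Parameters

theorem stmt_8_general {K : Type*} [Field K] [LinearOrder K] [IsStrictOrderedRing K] (N : ℕ)
    (G θ X : K) (hG : G ≠ 0) (hθ : |G| / 4 < |θ|) (hX : 0 < X)
    (lam a : K) (hlam : lam = 2 * θ / G + 1 / 2) (ha : a = 1 - 1 / lam) (ξ : ℕ → K)
    (hξ : ∀ k : ℕ, ξ k = (X / 2) * (a ^ (k - 1) + a ^ (N + 1 - k)) / (lam * (1 - a ^ (N + 1)))) :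
    (∀ k : ℕ, 1 ≤ k → k ≤ N + 1 → ξ k = ξ (N + 2 - k)) ∧
    (∀ k : ℕ, 1 ≤ k → k ≤ N + 1 → 0 < ξ k) ∧
    (∀ k : ℕ, 1 ≤ k → 2 * k < N + 1 → ξ (k + 1) < ξ k) ∧
    (∀ k : ℕ, 2 ≤ k → k ≤ N → 0 < ξ (k - 1) - 2 * ξ k + ξ (k + 1)) := by
  have hlam_range : lam < 0 ∨ 1 < lam := hlam ▸ two_mul_div_add_half_neg_or_one_lt hG hθ
  have hlam_ne : lam ≠ 0 := hlam_range.elim ne_of_lt fun h => (zero_lt_one.trans h).ne'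
  have ha_pos : 0 < a := ha ▸ one_sub_one_div_pos hlam_range
  have ha_ne : a ≠ 1 := by simpa [ha] using hlam_ne
  obtain ⟨c, hc, hξ_succ⟩ : ∃ c > 0, ∀ i, ξ (i + 1) = c * symmetrizedPow a N i := by
    refine ⟨X / 2 / ∑ i ∈ Finset.range (N + 1), a ^ i,
      div_pos (half_pos hX) (geom_sum_pos ha_pos.le N.succ_ne_zero), fun i => ?_⟩
    rw [hξ, ha, mul_one_sub_one_sub_one_div_pow hlam_ne, mul_div_right_comm,
      Nat.add_sub_cancel, Nat.add_sub_add_right, symmetrizedPow]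
  refine ⟨fun k hk hkN => ?_, fun k hk _ => ?_, fun k hk hkN => ?_, fun k hk hkN => ?_⟩ <;>
    obtain ⟨i, rfl⟩ := Nat.exists_eq_add_of_le' hk
  · rw [show N + 2 - (i + 1) = N - i + 1 by omega, hξ_succ, hξ_succ,
      symmetrizedPow_reflect a (by omega)]
  · exact hξ_succ i ▸ mul_pos hc (symmetrizedPow_pos ha_pos N i)
  · rw [hξ_succ, hξ_succ]
    exact mul_lt_mul_of_pos_left (symmetrizedPow_succ_lt ha_pos ha_ne (by omega)) hc
  · rw [show i + 2 - 1 = i + 1 by omega, hξ_succ, hξ_succ, hξ_succ, mul_left_comm, ← mul_sub,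
      ← mul_add]
    exact mul_pos hc (symmetrizedPow_second_difference_pos ha_pos ha_ne (by omega))

/-- If `θ > G/4` and `X > 0`, the directional trader's Nash-equilibrium schedule
`ξ_k = (X/2)(a^{k−1} + a^{N+1−k})/(λ(1−a^{N+1}))` (1-based, `k = 1,…,N+1`) has a
U-shape: time symmetry, positivity, strict decrease for `1 ≤ k < (N+1)/2`, and strict
convexity `ξ_{k−1} − 2ξ_k + ξ_{k+1} > 0` for `2 ≤ k ≤ N`. -/
theorem stmt_8 (N : ℕ) (hN : 1 ≤ N) (G θ X : ℝ) (hG : 0 < G) (hθ : G/4 < θ) (hX : 0 < X)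
    (lam a : ℝ) (hlam : lam = 2*θ/G + 1/2) (ha : a = 1 - 1/lam)
    (ξ : ℕ → ℝ)
    (hξ : ∀ k : ℕ, ξ k = (X/2) * (a^(k-1) + a^(N+1-k)) / (lam * (1 - a^(N+1)))) :
    (∀ k : ℕ, 1 ≤ k → k ≤ N+1 → ξ k = ξ (N+2-k)) ∧
    (∀ k : ℕ, 1 ≤ k → k ≤ N+1 → 0 < ξ k) ∧
    (∀ k : ℕ, 1 ≤ k → 2*k < N+1 → ξ (k+1) < ξ k) ∧
    (∀ k : ℕ, 2 ≤ k → k ≤ N → 0 < ξ (k-1) - 2*ξ k + ξ (k+1)) := by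
  have hθ_abs : |G| / 4 < |θ| := (abs_of_pos hG).symm ▸ hθ.trans_le (le_abs_self θ)
  exact stmt_8_general N G θ X hG.ne' hθ_abs hX lam a hlam ha ξ hξ
end

section
/- Suppose ξ ∈ ℝ^{N+1} has a U-shape, i.e. ξ_k = ξ_{N+2−k} for all k = 1,…,N+1, ξ_k > 0 for all k, ξ_k > ξ_{k+1} for every integer k with 1 ≤ k < (N+1)/2, and ξ_{k−1} − 2ξ_k + ξ_{k+1} > 0 for 2 ≤ k ≤ N. Let H be the (N+1)×(N+1) matrix with entries H_{i,m} = Σ_{j=1}^{N+1} 1_{{|i−j| = m−1}}·ξ_j, so that for every g ∈ ℝ^{N+1} and the symmetric Toeplitz matrix Π with Π_{ij} = g_{|i−j|+1} one has Π·ξ = H·g. Then the rank of H equals (N+1)/2 if N+1 is even and N/2 + 1 if N+1 is odd (i.e. rank H = ⌈(N+1)/2⌉), and the linear system H·g = e (where e = (1,…,1)ᵀ) has infinitely many solutions g ∈ ℝ^{N+1}. -/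
open Matrix

/-!
The row of `H` indexed by `i` depends only on the class of `i` under the reflection `i ↦ i.rev`,
because `ξ` is symmetric. So `H` has the same rank and the same solvability as the matrix of its
first `⌈(N+1)/2⌉` rows. For such a row no lag exceeds `i.rev`, and the lag `i.rev` itself is
attained only at the endpoints of the index range. Hence, with the columns in reverse order, these
rows contain an upper triangular block whose diagonal entries are `ξ 0` or, in the middle row,
`2 * ξ 0`, and they are linearly independent.
-/

section FullRowRank

variable {R K l m n : Type*} [Field K] [Fintype n]

lemma rank_submatrix_of_surjective [CommSemiring R] [StrongRankCondition R] (B : Matrix l n R)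
    {f : m → l} (hf : f.Surjective) : (B.submatrix f id).rank = B.rank := by
  refine le_antisymm (rank_submatrix_le B f id) ?_
  calc B.rank = ((B.submatrix f id).submatrix (Function.surjInv hf) id).rank := by
        rw [submatrix_submatrix, (Function.rightInverse_surjInv hf).comp_eq_id, Function.comp_id,
          submatrix_id_id]
    _ ≤ (B.submatrix f id).rank := rank_submatrix_le _ _ _

variable [Fintype l]

lemma rank_eq_card_of_det_submatrix_ne_zero [CommRing R] [IsDomain R] [DecidableEq l]
    {B : Matrix l n R} {c : l → n} (hdet : (B.submatrix id c).det ≠ 0) : B.rank = Fintype.card l :=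
  le_antisymm B.rank_le_card_height <|
    (rank_of_det_ne_zero hdet).symm.trans_le (rank_submatrix_le B id c)

lemma mulVec_surjective_of_rank_eq_card {B : Matrix l n K} (hB : B.rank = Fintype.card l) :
    Function.Surjective (B *ᵥ ·) := by
  have hrange : LinearMap.range B.mulVecLin = ⊤ :=
    Submodule.eq_top_of_finrank_eq <| hB.trans (Module.finrank_fintype_fun_eq_card K).symm
  exact LinearMap.range_eq_top.mp hrange

lemma infinite_setOf_mulVec_eq [Infinite K] {A : Matrix m n K} {b : m → K}
    (hA : A.rank < Fintype.card n) (hb : ∃ x, A *ᵥ x = b) :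
    {x | A *ᵥ x = b}.Infinite := by
  obtain ⟨x, rfl⟩ := hb
  have hker : LinearMap.ker A.mulVecLin ≠ ⊥ := by
    intro hbot
    have hdim := A.mulVecLin.finrank_range_add_finrank_ker
    rw [hbot, finrank_bot, Module.finrank_fintype_fun_eq_card] at hdim
    exact hA.ne hdim
  obtain ⟨v, hv, hv0⟩ := Submodule.exists_mem_ne_zero_of_ne_bot hker
  have hAv : A *ᵥ v = 0 := hv
  refine Set.infinite_of_injective_forall_mem (f := fun t : K => x + t • v)
    ((add_right_injective x).comp (smul_left_injective K hv0)) fun t => ?_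
  rw [Set.mem_ofPred_eq, mulVec_add, mulVec_smul, hAv, smul_zero, add_zero]

end FullRowRank

section Reflection

variable {n : ℕ}

lemma succ_div_two_le (n : ℕ) : (n + 1) / 2 ≤ n := by lia

/-- The quotient map of `Fin n` by the reflection `i ↦ i.rev`, each orbit being represented by its
smaller element. -/
def revFold (i : Fin n) : Fin ((n + 1) / 2) :=
  ⟨min i.val i.rev.val, by rw [Fin.val_rev]; lia⟩

lemma revFold_castLE (a : Fin ((n + 1) / 2)) : revFold (a.castLE (succ_div_two_le n)) = a := by
  ext
  simp only [revFold, Fin.val_rev, Fin.val_castLE]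
  lia

lemma castLE_revFold (i : Fin n) : (revFold i).castLE (succ_div_two_le n) = min i i.rev := by
  ext
  simp only [revFold, Fin.val_castLE, Fin.coe_min]

lemma apply_castLE_revFold {α : Type*} {b : Fin n → α} (hb : ∀ i, b i = b i.rev) (i : Fin n) :
    b ((revFold i).castLE (succ_div_two_le n)) = b i := by
  rw [castLE_revFold]
  rcases min_choice i i.rev with hmin | hmin <;> rw [hmin]
  exact (hb i).symm

lemma castLE_le_rev (a : Fin ((n + 1) / 2)) :
    a.castLE (succ_div_two_le n) ≤ (a.castLE (succ_div_two_le n)).rev := by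
  rw [Fin.le_def, Fin.val_rev, Fin.val_castLE]
  lia

lemma natDist_rev_rev (i j : Fin n) : Nat.dist i.rev j.rev = Nat.dist i j := by
  simp only [Nat.dist, Fin.val_rev]
  lia

lemma natDist_lt (i j : Fin n) : Nat.dist i j < n := by
  rw [Nat.dist]
  lia

lemma natDist_le_rev {i : Fin n} (hi : i ≤ i.rev) (j : Fin n) : Nat.dist i j ≤ i.rev := by
  rw [Fin.le_def, Fin.val_rev] at hi
  rw [Nat.dist, Fin.val_rev]
  lia

lemma natDist_eq_rev_iff_of_lt {N : ℕ} {i j : Fin (N + 1)} (hi : i < i.rev) :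
    Nat.dist i j = i.rev ↔ j = Fin.last N := by
  rw [Fin.lt_def, Fin.val_rev] at hi
  rw [Nat.dist, Fin.val_rev, Fin.ext_iff, Fin.val_last]
  lia

lemma natDist_eq_rev_iff_of_eq {N : ℕ} {i j : Fin (N + 1)} (hi : i = i.rev) :
    Nat.dist i j = i.rev ↔ j = 0 ∨ j = Fin.last N := by
  rw [Fin.ext_iff, Fin.val_rev] at hi
  rw [Nat.dist, Fin.val_rev, Fin.ext_iff, Fin.ext_iff, Fin.val_zero, Fin.val_last]
  lia

end Reflection

section LagMatrix

variable {R : Type*} {n N : ℕ}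

/-- The symmetric Toeplitz matrix with first row `g`. -/
def symmToeplitz (g : Fin n → R) : Matrix (Fin n) (Fin n) R :=
  of fun i j => g ⟨Nat.dist i j, natDist_lt i j⟩

section AddCommMonoid

variable [AddCommMonoid R]

/-- The matrix `H` of the linear map `g ↦ symmToeplitz g *ᵥ ξ`: its column `m` collects the trades
`ξ j` at time lag `m`. -/
def lagMatrix (ξ : Fin n → R) : Matrix (Fin n) (Fin n) R :=
  of fun i m => ∑ j : Fin n, if Nat.dist i j = m then ξ j else 0

lemma lagMatrix_apply (ξ : Fin n → R) (i m : Fin n) :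
    lagMatrix ξ i m = ∑ j : Fin n, if Nat.dist i j = m then ξ j else 0 :=
  rfl

lemma lagMatrix_rev {ξ : Fin n → R} (hsym : ∀ i, ξ i = ξ i.rev) (i : Fin n) :
    lagMatrix ξ i = lagMatrix ξ i.rev := by
  ext m
  rw [lagMatrix_apply, lagMatrix_apply, ← Equiv.sum_comp Fin.revPerm]
  simp only [Fin.revPerm_apply, ← hsym, ← natDist_rev_rev i, Fin.rev_rev]

lemma lagMatrix_apply_eq_zero (ξ : Fin n → R) {i m : Fin n} (hi : i ≤ i.rev) (hm : i.rev < m) :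
    lagMatrix ξ i m = 0 := by
  rw [lagMatrix_apply]
  exact Finset.sum_eq_zero fun j _ => if_neg ((natDist_le_rev hi j).trans_lt hm).ne

lemma lagMatrix_apply_rev_of_lt (ξ : Fin (N + 1) → R) {i : Fin (N + 1)} (hi : i < i.rev) :
    lagMatrix ξ i i.rev = ξ (Fin.last N) := by
  simp only [lagMatrix_apply, natDist_eq_rev_iff_of_lt hi, Finset.sum_ite_eq', Finset.mem_univ,
    if_true]

lemma lagMatrix_apply_rev_of_eq (hN : N ≠ 0) (ξ : Fin (N + 1) → R) {i : Fin (N + 1)}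
    (hi : i = i.rev) : lagMatrix ξ i i.rev = ξ 0 + ξ (Fin.last N) := by
  have hends : (0 : Fin (N + 1)) ≠ Fin.last N := fun h => hN (Fin.ext_iff.mp h).symm
  simp only [lagMatrix_apply, natDist_eq_rev_iff_of_eq hi]
  rw [Fintype.sum_eq_add 0 (Fin.last N) hends fun j hj => if_neg (not_or.mpr hj),
    if_pos (Or.inl rfl), if_pos (Or.inr rfl)]

/-- The rows of `lagMatrix ξ` up to the middle one, which represent the orbits of the reflection
`i ↦ i.rev`. -/
def halfLagMatrix (ξ : Fin n → R) : Matrix (Fin ((n + 1) / 2)) (Fin n) R :=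
  (lagMatrix ξ).submatrix (Fin.castLE (succ_div_two_le n)) id

lemma halfLagMatrix_submatrix_revFold {ξ : Fin n → R} (hsym : ∀ i, ξ i = ξ i.rev) :
    (halfLagMatrix ξ).submatrix revFold id = lagMatrix ξ :=
  funext (apply_castLE_revFold (lagMatrix_rev hsym))

end AddCommMonoid

lemma symmToeplitz_mulVec [CommSemiring R] (g ξ : Fin n → R) :
    symmToeplitz g *ᵥ ξ = lagMatrix ξ *ᵥ g := by
  ext i
  simp only [mulVec, dotProduct, lagMatrix_apply, Finset.sum_mul, ite_mul, zero_mul]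
  rw [Finset.sum_comm]
  refine Finset.sum_congr rfl fun j _ => ?_
  have hlag : ∀ m : Fin n, m ≠ ⟨Nat.dist i j, natDist_lt i j⟩ →
      (if Nat.dist i j = m then ξ j * g m else 0) = 0 :=
    fun m hm => if_neg fun h => hm (Fin.ext h.symm)
  rw [Fintype.sum_eq_single _ hlag, if_pos rfl, mul_comm, symmToeplitz, of_apply]

lemma lagMatrix_apply_rev_ne_zero [Semiring R] [NoZeroDivisors R] {ξ : Fin (N + 1) → R}
    (h2 : (2 : R) ≠ 0) (hN : N ≠ 0) (hsym : ∀ i, ξ i = ξ i.rev) (h0 : ξ 0 ≠ 0) {i : Fin (N + 1)}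
    (hi : i ≤ i.rev) : lagMatrix ξ i i.rev ≠ 0 := by
  have hlast : ξ (Fin.last N) = ξ 0 := by rw [hsym, Fin.rev_last]
  rcases hi.lt_or_eq with hlt | heq
  · rwa [lagMatrix_apply_rev_of_lt ξ hlt, hlast]
  · rw [lagMatrix_apply_rev_of_eq hN ξ heq, hlast, ← two_mul]
    exact mul_ne_zero h2 h0

section IsDomain

variable [CommRing R] [IsDomain R] {ξ : Fin (N + 1) → R}

lemma det_halfLagMatrix_submatrix_rev_ne_zero (h2 : (2 : R) ≠ 0) (hN : N ≠ 0)
    (hsym : ∀ i, ξ i = ξ i.rev) (h0 : ξ 0 ≠ 0) :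
    ((halfLagMatrix ξ).submatrix id
      fun a => (a.castLE (succ_div_two_le (N + 1))).rev).det ≠ 0 := by
  have htri : ((halfLagMatrix ξ).submatrix id
      fun a => (a.castLE (succ_div_two_le (N + 1))).rev).IsUpperTriangular := fun a k hka =>
    lagMatrix_apply_eq_zero ξ (castLE_le_rev a) (Fin.rev_lt_rev.mpr hka)
  rw [det_of_isUpperTriangular htri, Finset.prod_ne_zero_iff]
  exact fun a _ => lagMatrix_apply_rev_ne_zero h2 hN hsym h0 (castLE_le_rev a)

lemma rank_halfLagMatrix (h2 : (2 : R) ≠ 0) (hN : N ≠ 0) (hsym : ∀ i, ξ i = ξ i.rev)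
    (h0 : ξ 0 ≠ 0) : (halfLagMatrix ξ).rank = (N + 2) / 2 := by
  rw [rank_eq_card_of_det_submatrix_ne_zero
    (det_halfLagMatrix_submatrix_rev_ne_zero h2 hN hsym h0), Fintype.card_fin]

lemma rank_lagMatrix (h2 : (2 : R) ≠ 0) (hN : N ≠ 0) (hsym : ∀ i, ξ i = ξ i.rev)
    (h0 : ξ 0 ≠ 0) : (lagMatrix ξ).rank = (N + 2) / 2 := by
  rw [← halfLagMatrix_submatrix_revFold hsym,
    rank_submatrix_of_surjective _ (Function.RightInverse.surjective revFold_castLE),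
    rank_halfLagMatrix h2 hN hsym h0]

end IsDomain

lemma exists_lagMatrix_mulVec_eq {K : Type*} [Field K] {ξ : Fin (N + 1) → K} (h2 : (2 : K) ≠ 0)
    (hN : N ≠ 0) (hsym : ∀ i, ξ i = ξ i.rev) (h0 : ξ 0 ≠ 0) {b : Fin (N + 1) → K}
    (hb : ∀ i, b i = b i.rev) :
    ∃ g, lagMatrix ξ *ᵥ g = b := by
  have hrank := (rank_halfLagMatrix h2 hN hsym h0).trans (Fintype.card_fin _).symm
  obtain ⟨g, hg⟩ := mulVec_surjective_of_rank_eq_card hrank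
    fun a => b (a.castLE (succ_div_two_le (N + 1)))
  refine ⟨g, funext fun i => ?_⟩
  rw [← halfLagMatrix_submatrix_revFold hsym]
  exact (congrFun hg (revFold i)).trans (apply_castLE_revFold hb i)

end LagMatrix

theorem stmt_10_general {K : Type*} [Field K] [Infinite K] (h2 : (2 : K) ≠ 0) {N : ℕ} (hN : N ≠ 0)
    {ξ : Fin (N + 1) → K} (hsym : ∀ i, ξ i = ξ i.rev) (h0 : ξ 0 ≠ 0) :
    (∀ g, symmToeplitz g *ᵥ ξ = lagMatrix ξ *ᵥ g) ∧
    (lagMatrix ξ).rank = (N + 2) / 2 ∧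
    {g | lagMatrix ξ *ᵥ g = fun _ => 1}.Infinite := by
  have hrank := rank_lagMatrix h2 hN hsym h0
  refine ⟨fun g => symmToeplitz_mulVec g ξ, hrank, infinite_setOf_mulVec_eq ?_ ?_⟩
  · rw [hrank, Fintype.card_fin]
    lia
  · exact exists_lagMatrix_mulVec_eq h2 hN hsym h0 fun _ => rfl

/-- If `ξ ∈ ℝ^{N+1}` has a U-shape (time-symmetric, positive, strictly decreasing in the
first half, strictly convex) and `H` is the matrix with `H_{i,m} = Σ_j 1_{|i−j|=m−1}·ξ_j`,
so that `Toep(g)·ξ = H·g` for every `g`, then `rank H = ⌈(N+1)/2⌉` (i.e. `(N+1)/2` if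
`N+1` is even and `N/2+1` if `N+1` is odd) and the system `H·g = e` has infinitely many
solutions. (Indices are 0-based: entry `k` of the statement corresponds to `k−1` here.) -/
theorem stmt_10 (N : ℕ) (hN : 2 ≤ N)
    (ξ : Fin (N+1) → ℝ)
    (hsym : ∀ i : Fin (N+1), ξ i = ξ i.rev)
    (hpos : ∀ i : Fin (N+1), 0 < ξ i)
    (hdec : ∀ k : ℕ, ∀ hk : 2*(k+1) < N+1,
      ξ ⟨k+1, by omega⟩ < ξ ⟨k, by omega⟩)
    (hconv : ∀ m : ℕ, ∀ hm : m + 2 ≤ N,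
      0 < ξ ⟨m, by omega⟩ - 2 * ξ ⟨m+1, by omega⟩ + ξ ⟨m+2, by omega⟩)
    (H : Matrix (Fin (N+1)) (Fin (N+1)) ℝ)
    (hH : ∀ i m : Fin (N+1), H i m =
      ∑ j : Fin (N+1), if Nat.dist i.val j.val = m.val then ξ j else 0) :
    (∀ g : Fin (N+1) → ℝ,
      (Matrix.of fun i j : Fin (N+1) =>
        g ⟨Nat.dist i.val j.val, by
          have hi := i.isLt; have hj := j.isLt; simp [Nat.dist]; omega⟩) *ᵥ ξ
      = H *ᵥ g) ∧
    H.rank = (N+2)/2 ∧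
    {g : Fin (N+1) → ℝ | H *ᵥ g = fun _ => 1}.Infinite := by
  obtain rfl : H = lagMatrix ξ := Matrix.ext hH
  exact stmt_10_general two_ne_zero (by lia) hsym (hpos 0).ne'
end

section
/- Set λ = 2θ/G + 1/2 and a = 1 − 1/λ (so a ∈ (0,1) since θ > G/4). Then for every integer k with 2 ≤ k ≤ ⌊N/2⌋ + 1, the components of the directional Nash-equilibrium schedule ξ satisfy ξ_{k−1} − ξ_k = ((1−a)²/(2a)) · (X − 2·Σ_{i=1}^{k−1} ξ_i); in particular the ratio (ξ_{k−1} − ξ_k)/(X − 2·Σ_{i=1}^{k−1} ξ_i) is the same constant (1−a)²/(2a) for all such k. -/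
/-!
With `R m = a ^ m - a ^ (N + 1 - m)`, a telescoping identity gives
`(1 - a) * (a ^ (k - 1) + a ^ (N + 1 - k)) = R (k - 1) - R k`. Since `1 / λ = 1 - a`, each trade is
`ξ k = c * (R (k - 1) - R k)` with `c = X / (2 * R 0)`, so `X / 2 - (ξ 1 + ⋯ + ξ m) = c * R m`,
while `ξ (k - 1) - ξ k` is `c` times the second difference of `R` at `k - 1`. As `R` combines the
geometric progressions of ratios `a` and `a⁻¹`, it is an eigenvector of the second difference, with
eigenvalue `a - 2 + a⁻¹ = (1 - a) ^ 2 / a`.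
-/

/-- The shape `R m = a ^ m - a ^ (M - m)` of the gap `X - 2 * (ξ 1 + ⋯ + ξ m)` as a function of the
number `m` of trades made out of `M = N + 1`, up to a factor independent of `m`. The subtraction
`M - m` is truncated, so only `m ≤ M` is meaningful. -/
def gapProfile {R : Type*} [Ring R] (a : R) (M m : ℕ) : R := a ^ m - a ^ (M - m)

section Ring

variable {R : Type*} [Ring R]

theorem gapProfile_zero (a : R) (M : ℕ) : gapProfile a M 0 = 1 - a ^ M := by
  simp [gapProfile]

theorem gapProfile_sub_gapProfile_succ (a : R) {M m : ℕ} (hm : m < M) :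
    gapProfile a M m - gapProfile a M (m + 1) = (1 - a) * (a ^ m + a ^ (M - (m + 1))) := by
  have hexp : M - m = M - (m + 1) + 1 := by omega
  rw [gapProfile, gapProfile, hexp, pow_succ' a m, pow_succ' a (M - (m + 1))]
  noncomm_ring

theorem mul_gapProfile_second_difference (a : R) {M m : ℕ} (hm : m + 1 < M) :
    a * ((gapProfile a M m - gapProfile a M (m + 1)) -
        (gapProfile a M (m + 1) - gapProfile a M (m + 2))) =
      (1 - a) ^ 2 * gapProfile a M (m + 1) := by
  have hexp : M - (m + 1) = M - (m + 2) + 1 := by omega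
  rw [gapProfile_sub_gapProfile_succ a (by omega), gapProfile_sub_gapProfile_succ a hm,
    gapProfile, hexp, pow_succ' a m, pow_succ' a (M - (m + 2))]
  noncomm_ring

end Ring

theorem sum_Icc_one_of_eq_mul_sub {R : Type*} [NonUnitalNonAssocRing R]
    {f g : ℕ → R} {c : R} {m : ℕ}
    (hf : ∀ i < m, f (i + 1) = c * (g i - g (i + 1))) :
    ∑ i ∈ Finset.Icc 1 m, f i = c * (g 0 - g m) := by
  calc ∑ i ∈ Finset.Icc 1 m, f i = ∑ i ∈ Finset.range m, f (i + 1) := by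
        rw [Finset.range_eq_Ico, Finset.sum_Ico_add' f 0 m 1, zero_add,
          Finset.Ico_add_one_right_eq_Icc]
    _ = ∑ i ∈ Finset.range m, c * (g i - g (i + 1)) :=
        Finset.sum_congr rfl fun i hi => hf i (Finset.mem_range.mp hi)
    _ = c * (g 0 - g m) := by rw [← Finset.mul_sum, Finset.sum_range_sub']

theorem one_sub_one_div_mem_Ioo {K : Type*} [Field K] [LinearOrder K] [IsStrictOrderedRing K]
    {x : K} (hx : 1 < x) : 1 - 1 / x ∈ Set.Ioo 0 1 :=
  ⟨sub_pos.mpr ((div_lt_one (by positivity)).mpr hx), sub_lt_self 1 (by positivity)⟩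

theorem one_lt_two_mul_div_add_half {K : Type*} [Field K] [LinearOrder K] [IsStrictOrderedRing K]
    {G θ : K} (hG : 0 < G) (hθ : G / 4 < θ) : 1 < 2 * θ / G + 1 / 2 := by
  have hhalf : 1 / 2 < 2 * θ / G := (lt_div_iff₀ hG).mpr (by linarith)
  linarith

section Field

variable {K : Type*} [Field K] {N : ℕ} {X lam a : K} {ξ : ℕ → K}

theorem schedule_eq_mul_gapProfile_sub (ha : a = 1 - 1 / lam)
    (hξ : ∀ k ∈ Finset.Icc 1 (N + 1),
      ξ k = (X / 2) * (a ^ (k - 1) + a ^ (N + 1 - k)) / (lam * (1 - a ^ (N + 1))))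
    {i : ℕ} (hi : i < N + 1) :
    ξ (i + 1) = X / 2 / gapProfile a (N + 1) 0 *
      (gapProfile a (N + 1) i - gapProfile a (N + 1) (i + 1)) := by
  have hlam : 1 - a = lam⁻¹ := by rw [ha, sub_sub_cancel, one_div]
  rw [hξ (i + 1) (Finset.mem_Icc.mpr ⟨by omega, hi⟩), gapProfile_sub_gapProfile_succ a hi,
    gapProfile_zero, hlam, Nat.add_sub_cancel, div_eq_mul_inv, mul_inv]
  ring

theorem stmt_11_general [NeZero (2 : K)] (ha₀ : a ≠ 0) (haN : a ^ (N + 1) ≠ 1)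
    (ha : a = 1 - 1 / lam)
    (hξ : ∀ k ∈ Finset.Icc 1 (N + 1),
      ξ k = (X / 2) * (a ^ (k - 1) + a ^ (N + 1 - k)) / (lam * (1 - a ^ (N + 1))))
    {k : ℕ} (hk : 2 ≤ k) (hkN : k ≤ N + 1) :
    ξ (k - 1) - ξ k =
      ((1 - a) ^ 2 / (2 * a)) * (X - 2 * ∑ i ∈ Finset.Icc 1 (k - 1), ξ i) := by
  obtain ⟨j, rfl⟩ := Nat.exists_eq_add_of_le' hk
  rw [show j + 2 - 1 = j + 1 from rfl]
  set R := gapProfile a (N + 1) with hR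
  set c := X / 2 / R 0 with hc
  have trade {i : ℕ} (hi : i < N + 1) : ξ (i + 1) = c * (R i - R (i + 1)) :=
    schedule_eq_mul_gapProfile_sub ha hξ hi
  have hcR : 2 * (c * R 0) = X := by
    have hR₀ : R 0 ≠ 0 := by rw [hR, gapProfile_zero]; exact sub_ne_zero.mpr haN.symm
    rw [hc, div_mul_cancel₀ _ hR₀, mul_div_cancel₀ _ two_ne_zero]
  have gap : X - 2 * ∑ i ∈ Finset.Icc 1 (j + 1), ξ i = 2 * (c * R (j + 1)) := by
    rw [sum_Icc_one_of_eq_mul_sub fun i hi => trade (by omega)]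
    linear_combination -hcR
  have eigen : a * ((R j - R (j + 1)) - (R (j + 1) - R (j + 2))) = (1 - a) ^ 2 * R (j + 1) :=
    mul_gapProfile_second_difference a (by omega)
  rw [gap, trade (by omega), trade (by omega)]
  field_simp
  linear_combination c * eigen

end Field

/-- With `λ = 2θ/G + 1/2`, `a = 1 − 1/λ ∈ (0,1)` (since `θ > G/4`), for every
`2 ≤ k ≤ ⌊N/2⌋ + 1` the components of the directional Nash-equilibrium schedule satisfy
`ξ_{k−1} − ξ_k = ((1−a)²/(2a))·(X − 2·Σ_{i=1}^{k−1} ξ_i)`; in particular the ratio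
`(ξ_{k−1} − ξ_k)/(X − 2·Σ_{i=1}^{k−1} ξ_i)` equals the constant `(1−a)²/(2a)`. -/
theorem stmt_11 (N : ℕ) (hN : 2 ≤ N) (G θ X : ℝ) (hG : 0 < G) (hθ : G/4 < θ) (hX : 0 < X)
    (lam a : ℝ) (hlam : lam = 2*θ/G + 1/2) (ha : a = 1 - 1/lam)
    (ξ : ℕ → ℝ)
    (hξ : ∀ k : ℕ, ξ k = (X/2) * (a^(k-1) + a^(N+1-k)) / (lam * (1 - a^(N+1)))) :
    ∀ k : ℕ, 2 ≤ k → k ≤ N/2 + 1 →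
      ξ (k-1) - ξ k = ((1-a)^2 / (2*a)) * (X - 2 * ∑ i ∈ Finset.Icc 1 (k-1), ξ i) := by
  intro k hk hkN
  have ha_mem : a ∈ Set.Ioo 0 1 :=
    ha ▸ one_sub_one_div_mem_Ioo (hlam ▸ one_lt_two_mul_div_add_half hG hθ)
  have haN : a ^ (N + 1) ≠ 1 := (pow_lt_one₀ ha_mem.1.le ha_mem.2 N.succ_ne_zero).ne
  exact stmt_11_general ha_mem.1.ne' haN ha (fun i _ => hξ i) hk (by omega)
end

section
/- Suppose θ > G/4 and X > 0. Then X − 2ξ_1 ≠ 0 and the slope of the linear implied transient impact function satisfies −2θN·(ξ_1 − ξ_2)/(X − 2ξ_1) = −θN·(1−a)²/a = −4θN·G²/(16θ² − G²), which is strictly negative. -/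
/-!
Since `1 / λ = 1 - a`, both `ξ₁ - ξ₂` and `X - 2 ξ₁` are multiples of
`X (1 - a ^ (N - 1)) / (1 - a ^ (N + 1))`, with cofactors `(1 - a)² / 2` and `a`. Hence their
quotient `(1 - a)² / (2 a)` depends on neither `N` nor `X`, and the dependence on `θ` and `G` comes
from `a = (4θ - G) / (4θ + G)`.
-/

section EquilibriumSchedule

variable {K : Type*} [Field K]

/-- The `k`-th trade of the directional trader liquidating `X` at `N + 1` dates in equilibrium,
for `1 ≤ k ≤ N + 1`. The factor `1 / λ` of the paper's formula is written as `1 - a`. -/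
def equilibriumSchedule (X a : K) (N k : ℕ) : K :=
  X / 2 * (a ^ (k - 1) + a ^ (N + 1 - k)) * (1 - a) / (1 - a ^ (N + 1))

theorem equilibriumSchedule_one_sub_one_div (X lam : K) (N k : ℕ) :
    equilibriumSchedule X (1 - 1 / lam) N k =
      X / 2 * ((1 - 1 / lam) ^ (k - 1) + (1 - 1 / lam) ^ (N + 1 - k)) /
        (lam * (1 - (1 - 1 / lam) ^ (N + 1))) := by
  rw [equilibriumSchedule, sub_sub_cancel, mul_one_div, div_div]

theorem equilibriumSchedule_one_sub_two (X a : K) (n : ℕ) :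
    equilibriumSchedule X a (n + 1) 1 - equilibriumSchedule X a (n + 1) 2 =
      X * (1 - a ^ n) / (1 - a ^ (n + 2)) * ((1 - a) ^ 2 / 2) := by
  simp only [equilibriumSchedule, Nat.sub_self, Nat.add_one_sub_one, Nat.reduceSubDiff]
  ring

variable [NeZero (2 : K)] {X a : K} {n : ℕ}

theorem sub_two_mul_equilibriumSchedule_one (X : K) (hD : a ^ (n + 2) ≠ 1) :
    X - 2 * equilibriumSchedule X a (n + 1) 1 =
      X * (1 - a ^ n) / (1 - a ^ (n + 2)) * a := by
  have h2 : (2 : K) ≠ 0 := two_ne_zero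
  have hD' : 1 - a ^ (n + 2) ≠ 0 := sub_ne_zero.mpr hD.symm
  simp only [equilibriumSchedule, Nat.sub_self, Nat.add_sub_cancel]
  field_simp
  ring

theorem sub_two_mul_equilibriumSchedule_one_ne_zero (hX : X ≠ 0) (ha : a ≠ 0)
    (hP : a ^ n ≠ 1) (hD : a ^ (n + 2) ≠ 1) :
    X - 2 * equilibriumSchedule X a (n + 1) 1 ≠ 0 := by
  rw [sub_two_mul_equilibriumSchedule_one X hD]
  exact mul_ne_zero (div_ne_zero (mul_ne_zero hX (sub_ne_zero.mpr hP.symm))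
    (sub_ne_zero.mpr hD.symm)) ha

theorem equilibriumSchedule_one_sub_two_div (hX : X ≠ 0) (hP : a ^ n ≠ 1)
    (hD : a ^ (n + 2) ≠ 1) :
    (equilibriumSchedule X a (n + 1) 1 - equilibriumSchedule X a (n + 1) 2) /
      (X - 2 * equilibriumSchedule X a (n + 1) 1) = (1 - a) ^ 2 / 2 / a := by
  have hC : X * (1 - a ^ n) / (1 - a ^ (n + 2)) ≠ 0 :=
    div_ne_zero (mul_ne_zero hX (sub_ne_zero.mpr hP.symm)) (sub_ne_zero.mpr hD.symm)
  rw [equilibriumSchedule_one_sub_two, sub_two_mul_equilibriumSchedule_one X hD,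
    mul_div_mul_left _ _ hC]

end EquilibriumSchedule

section DecayRatio

variable {K : Type*} [Field K]

/-- The ratio `a = 1 - 1 / λ`, `λ = 2θ/G + 1/2`, governing the geometric decay of the equilibrium
schedule for kernel `G` and transaction cost parameter `θ`. -/
def decayRatio (G θ : K) : K :=
  1 - 1 / (2 * θ / G + 1 / 2)

theorem decayRatio_eq_div [NeZero (2 : K)] {G θ : K} (hG : G ≠ 0) (hθ : 4 * θ + G ≠ 0) :
    decayRatio G θ = (4 * θ - G) / (4 * θ + G) := by
  have h2 : (2 : K) ≠ 0 := two_ne_zero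
  have hlam : 2 * θ / G + 1 / 2 = (4 * θ + G) / (2 * G) := by
    field_simp
    ring
  rw [decayRatio, hlam, one_div_div, one_sub_div hθ]
  ring

theorem one_sub_decayRatio_sq_div [NeZero (2 : K)] {G θ : K} (hG : G ≠ 0)
    (hθ : 4 * θ + G ≠ 0) :
    (1 - decayRatio G θ) ^ 2 / decayRatio G θ = 4 * G ^ 2 / (16 * θ ^ 2 - G ^ 2) := by
  have hfactor : 16 * θ ^ 2 - G ^ 2 = (4 * θ - G) * (4 * θ + G) := by ring
  rw [decayRatio_eq_div hG hθ, one_sub_div hθ, hfactor]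
  field_simp
  ring

theorem decayRatio_mem_Ioo [LinearOrder K] [IsStrictOrderedRing K] {G θ : K} (hG : 0 < G)
    (hθ : G / 4 < θ) : decayRatio G θ ∈ Set.Ioo 0 1 := by
  have hnum : 0 < 4 * θ - G := by linarith
  have hden : 0 < 4 * θ + G := by linarith
  rw [decayRatio_eq_div hG.ne' hden.ne']
  exact ⟨div_pos hnum hden, (div_lt_one hden).mpr (by linarith)⟩

end DecayRatio

/-- If `θ > G/4` and `X > 0`, then `X − 2ξ_1 ≠ 0` and the slope of the linear implied
transient impact function satisfies
`−2θN(ξ_1 − ξ_2)/(X − 2ξ_1) = −θN(1−a)²/a = −4θNG²/(16θ² − G²) < 0`. -/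
theorem stmt_13 (N : ℕ) (hN : 2 ≤ N) (G θ X : ℝ) (hG : 0 < G) (hθ : G/4 < θ) (hX : 0 < X)
    (lam a : ℝ) (hlam : lam = 2*θ/G + 1/2) (ha : a = 1 - 1/lam)
    (ξ : ℕ → ℝ)
    (hξ : ∀ k : ℕ, ξ k = (X/2) * (a^(k-1) + a^(N+1-k)) / (lam * (1 - a^(N+1)))) :
    X - 2 * ξ 1 ≠ 0 ∧
    -2*θ*N*(ξ 1 - ξ 2)/(X - 2*ξ 1) = -θ*N*(1-a)^2/a ∧
    -θ*N*(1-a)^2/a = -4*θ*N*G^2/(16*θ^2 - G^2) ∧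
    -4*θ*N*G^2/(16*θ^2 - G^2) < 0 := by
  obtain rfl : a = decayRatio G θ := by rw [ha, hlam, decayRatio]
  obtain rfl : ξ = equilibriumSchedule X (decayRatio G θ) N := by
    funext k
    rw [hξ, ha, equilibriumSchedule_one_sub_one_div]
  obtain ⟨n, rfl⟩ := Nat.exists_eq_add_of_le' (one_le_two.trans hN)
  obtain ⟨ha_pos, ha_lt_one⟩ := decayRatio_mem_Ioo hG hθ
  have hpow {m : ℕ} (hm : m ≠ 0) : decayRatio G θ ^ m ≠ 1 :=
    (pow_lt_one₀ ha_pos.le ha_lt_one hm).ne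
  have hθ_pos : 0 < θ := by linarith
  have hslope : -θ * ↑(n + 1) * (1 - decayRatio G θ) ^ 2 / decayRatio G θ =
      -4 * θ * ↑(n + 1) * G ^ 2 / (16 * θ ^ 2 - G ^ 2) := by
    rw [mul_div_assoc, one_sub_decayRatio_sq_div hG.ne' (by positivity)]
    ring
  refine ⟨sub_two_mul_equilibriumSchedule_one_ne_zero hX.ne' ha_pos.ne' (hpow (by lia))
    (hpow (by lia)), ?_, hslope, ?_⟩
  · rw [mul_div_assoc,
      equilibriumSchedule_one_sub_two_div hX.ne' (hpow (by lia)) (hpow (by lia))]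
    ring
  · rw [← hslope, neg_mul, neg_mul, neg_div, neg_lt_zero]
    have := sub_pos.mpr ha_lt_one
    positivity
end

section
/- For a fixed integer N ≥ 1, consider the absolute slope s(θ, G) = 4θN·G²/(16θ² − G²) of the linear implied transient impact function. Then: (i) for each fixed G > 0, the map θ ↦ s(θ, G) is strictly decreasing on the interval (G/4, ∞); and (ii) for each fixed θ > 0, the map G ↦ s(θ, G) is strictly increasing on the interval (0, 4θ). -/
/-!
With `x = 4θ`, the slope is `N * x * G² / (x² - G²)`. In `x` it is a positive multiple of
`2 * x / (x² - G²) = 1 / (x - G) + 1 / (x + G)`, both of whose terms decrease for `x > G > 0`; in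
`G` it is a positive multiple of `G² / (x² - G²)`, whose numerator increases while its denominator
decreases.
-/

theorem two_mul_div_sq_sub_sq {K : Type*} [Field K] {a x : K} (hx : x ≠ a) (hx' : x ≠ -a) :
    2 * x / (x ^ 2 - a ^ 2) = (x - a)⁻¹ + (x - -a)⁻¹ := by
  rw [inv_add_inv (sub_ne_zero.2 hx) (sub_ne_zero.2 hx')]
  ring

section LinearOrderedField

variable {K : Type*} [Field K] [LinearOrder K] [IsStrictOrderedRing K]

theorem strictAntiOn_inv_sub (a : K) : StrictAntiOn (fun x => (x - a)⁻¹) (Set.Ioi a) :=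
  fun _ hx _ _ hxy => inv_strictAnti₀ (sub_pos.2 hx) (sub_lt_sub_right hxy a)

theorem strictAntiOn_two_mul_div_sq_sub_sq (a : K) :
    StrictAntiOn (fun x => 2 * x / (x ^ 2 - a ^ 2)) (Set.Ioi |a|) := by
  have hsum : StrictAntiOn (fun x => (x - a)⁻¹ + (x - -a)⁻¹) (Set.Ioi |a|) :=
    ((strictAntiOn_inv_sub a).mono (Set.Ioi_subset_Ioi (le_abs_self a))).add
      ((strictAntiOn_inv_sub (-a)).mono (Set.Ioi_subset_Ioi (neg_le_abs a)))
  exact hsum.congr fun x hx => (two_mul_div_sq_sub_sq ((le_abs_self a).trans_lt hx).ne'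
    ((neg_le_abs a).trans_lt hx).ne').symm

theorem strictMonoOn_pow_div_pow_sub_pow (a : K) {n : ℕ} (hn : n ≠ 0) :
    StrictMonoOn (fun x => x ^ n / (a ^ n - x ^ n)) (Set.Ico 0 a) := by
  rintro x ⟨hx, -⟩ y ⟨hy, hya⟩ hxy
  have hpow : x ^ n < y ^ n := pow_lt_pow_left₀ hxy hx hn
  exact div_lt_div₀ hpow (sub_le_sub_left hpow.le _) (pow_nonneg hy n)
    (sub_pos.2 (pow_lt_pow_left₀ hya hy hn))

theorem stmt_14_general {c : K} (hc : 0 < c) :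
    (∀ G : K, 0 < G →
      StrictAntiOn (fun θ => 4 * θ * c * G ^ 2 / (16 * θ ^ 2 - G ^ 2)) (Set.Ioi (G / 4))) ∧
    (∀ θ : K, 0 < θ →
      StrictMonoOn (fun G => 4 * θ * c * G ^ 2 / (16 * θ ^ 2 - G ^ 2)) (Set.Ioo 0 (4 * θ))) := by
  constructor
  · intro G hG
    have slope_eq (θ : K) : 4 * θ * c * G ^ 2 / (16 * θ ^ 2 - G ^ 2) =
        c * G ^ 2 / 2 * (2 * (4 * θ) / ((4 * θ) ^ 2 - G ^ 2)) := by ring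
    have abs_lt_four_mul {θ : K} (hθ : θ ∈ Set.Ioi (G / 4)) : |G| < 4 * θ := by
      rw [abs_of_pos hG]
      exact (div_lt_iff₀' four_pos).1 hθ
    intro θ₁ hθ₁ θ₂ hθ₂ hlt
    simp only [slope_eq]
    have coeff_pos : 0 < c * G ^ 2 / 2 := by positivity
    exact mul_lt_mul_of_pos_left (strictAntiOn_two_mul_div_sq_sub_sq G (abs_lt_four_mul hθ₁)
      (abs_lt_four_mul hθ₂) (mul_lt_mul_of_pos_left hlt four_pos)) coeff_pos
  · intro θ hθ
    have slope_eq (G : K) : 4 * θ * c * G ^ 2 / (16 * θ ^ 2 - G ^ 2) =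
        4 * θ * c * (G ^ 2 / ((4 * θ) ^ 2 - G ^ 2)) := by ring
    simp only [slope_eq]
    have hmono := (strictMonoOn_pow_div_pow_sub_pow (4 * θ) two_ne_zero).mono
      Set.Ioo_subset_Ico_self
    exact fun _ hG₁ _ hG₂ hlt => mul_lt_mul_of_pos_left (hmono hG₁ hG₂ hlt) (by positivity)

end LinearOrderedField

/-- For fixed `N ≥ 1`, the absolute slope `s(θ,G) = 4θN·G²/(16θ² − G²)` of the linear
implied transient impact function is (i) strictly decreasing in `θ` on `(G/4, ∞)` for
each fixed `G > 0`, and (ii) strictly increasing in `G` on `(0, 4θ)` for each fixed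
`θ > 0`. -/
theorem stmt_14 (N : ℕ) (hN : 1 ≤ N) :
    (∀ G : ℝ, 0 < G →
      StrictAntiOn (fun θ : ℝ => 4*θ*N*G^2/(16*θ^2 - G^2)) (Set.Ioi (G/4))) ∧
    (∀ θ : ℝ, 0 < θ →
      StrictMonoOn (fun G : ℝ => 4*θ*N*G^2/(16*θ^2 - G^2)) (Set.Ioo 0 (4*θ))) := by
  exact stmt_14_general (Nat.cast_pos.2 hN)
end

section
/- Let α, β ∈ ℝ and let Γ be the (N+1)×(N+1) matrix with entries Γ_{ij} = α + β·|i−j|/N (the kernel matrix of the linear decay kernel G(t) = α + βt on the equidistant grid t_i = i/N, with no transaction costs). Let u = (1/2)(e_1 + e_{N+1}) ∈ ℝ^{N+1}, where e_1 and e_{N+1} are the first and last standard basis vectors. Then Γ·u = (α + β/2)·e, where e = (1,…,1)ᵀ. Consequently, if Γ is invertible and α + β/2 ≠ 0, then eᵀΓ^{−1}e ≠ 0 and Γ^{−1}e / (eᵀΓ^{−1}e) = u; i.e. the optimal execution schedule of the Transient Impact Model with any linear kernel and zero transaction costs places half the inventory at the first trading time and half at the last, regardless of α and β. -/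
open Matrix

/-!
For a lag kernel `g` with `g k + g (N - k) = 2 * c`, the first and last columns of the kernel
matrix have constant average `c`, so placing half the inventory at each endpoint equalises the
impact at all trading times. If the kernel matrix is invertible, its inverse carries `𝟙` to a
multiple of this schedule, and the unit-inventory normalisation fixes the multiple.
-/

section NonsingInv

variable {n R : Type*} [Fintype n] [DecidableEq n] [CommRing R]
  {A : Matrix n n R} {e u : n → R} {c : R}

theorem smul_nonsing_inv_mulVec_eq_of_mulVec_eq_smul (hA : IsUnit A) (hu : A *ᵥ u = c • e) :
    c • (A⁻¹ *ᵥ e) = u := by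
  have hdet : IsUnit A.det := (isUnit_iff_isUnit_det A).mp hA
  rw [← mulVec_smul, ← hu, mulVec_mulVec, nonsing_inv_mul A hdet, one_mulVec]

theorem mul_dotProduct_nonsing_inv_mulVec_eq_of_mulVec_eq_smul (w : n → R) (hA : IsUnit A)
    (hu : A *ᵥ u = c • e) : c * (w ⬝ᵥ (A⁻¹ *ᵥ e)) = w ⬝ᵥ u := by
  rw [← smul_eq_mul, ← dotProduct_smul, smul_nonsing_inv_mulVec_eq_of_mulVec_eq_smul hA hu]

theorem dotProduct_nonsing_inv_mulVec_ne_zero_of_mulVec_eq_smul {w : n → R} (hA : IsUnit A)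
    (hu : A *ᵥ u = c • e) (hwu : w ⬝ᵥ u ≠ 0) : w ⬝ᵥ (A⁻¹ *ᵥ e) ≠ 0 := by
  rw [← mul_dotProduct_nonsing_inv_mulVec_eq_of_mulVec_eq_smul w hA hu] at hwu
  exact right_ne_zero_of_mul hwu

end NonsingInv

section OptimalSchedule

variable {n K : Type*} [Fintype n] [DecidableEq n] [Field K]
  {Γ : Matrix n n K} {u : n → K} {c : K}

/-- The optimal execution schedule `Γ⁻¹𝟙 / (𝟙ᵀΓ⁻¹𝟙)` for unit inventory and zero temporary cost
in the Transient Impact Model with kernel matrix `Γ`. It is meaningful only when `Γ` is invertible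
and `𝟙ᵀΓ⁻¹𝟙 ≠ 0`. -/
noncomputable def optimalSchedule (Γ : Matrix n n K) : n → K :=
  (1 ⬝ᵥ (Γ⁻¹ *ᵥ 1))⁻¹ • (Γ⁻¹ *ᵥ 1)

theorem optimalSchedule_eq_of_mulVec_eq_smul_one (hΓ : IsUnit Γ) (hu : Γ *ᵥ u = c • 1)
    (hu_sum : 1 ⬝ᵥ u = 1) : optimalSchedule Γ = u := by
  have hmul := mul_dotProduct_nonsing_inv_mulVec_eq_of_mulVec_eq_smul 1 hΓ hu
  rw [optimalSchedule, ← eq_inv_of_mul_eq_one_left (hmul.trans hu_sum),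
    smul_nonsing_inv_mulVec_eq_of_mulVec_eq_smul hΓ hu]

end OptimalSchedule

/-- The kernel matrix of a decay kernel on an equidistant grid of `N + 1` trading times. The
kernel is given as a function `g` of the integer lag `|i - j|`, so that a kernel `G` on `[0, 1]`
corresponds to `g k = G (k / N)`. -/
def kernelMatrix {R : Type*} (N : ℕ) (g : ℕ → R) : Matrix (Fin (N + 1)) (Fin (N + 1)) R :=
  of fun i j => g (Nat.dist i j)

/-- The schedule trading half of the unit inventory at the first trading time and half at the
last. -/
noncomputable def endpointSchedule (K : Type*) [Field K] (N : ℕ) : Fin (N + 1) → K :=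
  (1 / 2 : K) • (Pi.single 0 1 + Pi.single (Fin.last N) 1)

/-- The linear decay kernel `G t = α + β * t` at the grid time `t = k / N`, as a function of the
integer lag `k`. -/
def linearKernel {K : Type*} [Field K] (N : ℕ) (α β : K) (k : ℕ) : K :=
  α + β * k / N

section EndpointSchedule

variable {K : Type*} [Field K] {N : ℕ}

theorem mulVec_endpointSchedule_apply {m : Type*} (A : Matrix m (Fin (N + 1)) K) (i : m) :
    (A *ᵥ endpointSchedule K N) i = (1 / 2) * (A i 0 + A i (Fin.last N)) := by
  simp [endpointSchedule, mulVec_smul, mulVec_add, mul_add]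

variable [NeZero (2 : K)]

theorem one_dotProduct_endpointSchedule : 1 ⬝ᵥ endpointSchedule K N = 1 := by
  rw [endpointSchedule, dotProduct_smul, dotProduct_add, dotProduct_single_one,
    dotProduct_single_one, Pi.one_apply, Pi.one_apply, one_add_one_eq_two, smul_eq_mul,
    one_div_mul_cancel two_ne_zero]

theorem kernelMatrix_mulVec_endpointSchedule {g : ℕ → K} {c : K}
    (hg : ∀ k ≤ N, g k + g (N - k) = 2 * c) :
    kernelMatrix N g *ᵥ endpointSchedule K N = c • 1 := by
  ext i
  have hfirst : kernelMatrix N g i 0 = g i := congrArg g (Nat.dist_zero_right i)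
  have hlast : kernelMatrix N g i (Fin.last N) = g (N - i) :=
    congrArg g (Nat.dist_eq_sub_of_le i.is_le)
  calc (kernelMatrix N g *ᵥ endpointSchedule K N) i
      = (1 / 2) * (g i + g (N - i)) := by rw [mulVec_endpointSchedule_apply, hfirst, hlast]
    _ = (1 / 2) * (2 * c) := by rw [hg i i.is_le]
    _ = c := by rw [← mul_assoc, one_div_mul_cancel two_ne_zero, one_mul]
    _ = (c • 1 : Fin (N + 1) → K) i := (mul_one c).symm

theorem linearKernel_add_reflect (hN : (N : K) ≠ 0) (α β : K) :
    ∀ k ≤ N, linearKernel N α β k + linearKernel N α β (N - k) = 2 * (α + β / 2) := by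
  intro k hk
  rw [linearKernel, linearKernel, Nat.cast_sub hk]
  field_simp
  ring

theorem stmt_18_general {g : ℕ → K} {c : K} (hg : ∀ k ≤ N, g k + g (N - k) = 2 * c) :
    kernelMatrix N g *ᵥ endpointSchedule K N = c • 1 ∧
    (IsUnit (kernelMatrix N g) →
      1 ⬝ᵥ ((kernelMatrix N g)⁻¹ *ᵥ 1) ≠ 0 ∧
        optimalSchedule (kernelMatrix N g) = endpointSchedule K N) := by
  have hu := kernelMatrix_mulVec_endpointSchedule hg
  have hu_sum : 1 ⬝ᵥ endpointSchedule K N = 1 := one_dotProduct_endpointSchedule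
  exact ⟨hu, fun hΓ =>
    ⟨dotProduct_nonsing_inv_mulVec_ne_zero_of_mulVec_eq_smul hΓ hu (hu_sum ▸ one_ne_zero),
    optimalSchedule_eq_of_mulVec_eq_smul_one hΓ hu hu_sum⟩⟩

end EndpointSchedule

/-- For a linear kernel matrix `Γ_{ij} = α + β·|i−j|/N` on the equidistant grid and
`u = (1/2)(e_1 + e_{N+1})`, one has `Γ·u = (α + β/2)·e`; consequently, if `Γ` is
invertible and `α + β/2 ≠ 0`, then `eᵀΓ⁻¹e ≠ 0` and `Γ⁻¹e/(eᵀΓ⁻¹e) = u`: the optimal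
execution schedule with any linear kernel and zero transaction costs places half the
inventory at the first trading time and half at the last. -/
theorem stmt_18 (N : ℕ) (hN : 1 ≤ N) (α β : ℝ)
    (Γ : Matrix (Fin (N+1)) (Fin (N+1)) ℝ)
    (hΓ : ∀ i j : Fin (N+1), Γ i j = α + β * (Nat.dist i.val j.val) / N)
    (u e : Fin (N+1) → ℝ)
    (hu : u = (1/2 : ℝ) • (Pi.single (0 : Fin (N+1)) 1 + Pi.single (Fin.last N) 1))
    (he : e = fun _ => 1) :
    Γ *ᵥ u = (α + β/2) • e ∧
    (IsUnit Γ → α + β/2 ≠ 0 →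
      e ⬝ᵥ (Γ⁻¹ *ᵥ e) ≠ 0 ∧ (e ⬝ᵥ (Γ⁻¹ *ᵥ e))⁻¹ • (Γ⁻¹ *ᵥ e) = u) := by
  obtain rfl : Γ = kernelMatrix N (linearKernel N α β) := Matrix.ext hΓ
  subst hu he
  have hN₀ : (N : ℝ) ≠ 0 := Nat.cast_ne_zero.mpr (Nat.one_le_iff_ne_zero.mp hN)
  have hmain := stmt_18_general (linearKernel_add_reflect hN₀ α β)
  exact ⟨hmain.1, fun hΓ _ => hmain.2 hΓ⟩
end

section
/- Let G > 0, θ > 0, S ∈ ℝ, and define the expected one-period cost of the myopic market impact game by f(x, y) = (G/2)x² − Sx + (G/2)xy + θx² for x, y ∈ ℝ. Then: (i) for each fixed y ∈ ℝ, the function x ↦ f(x, y) has the unique minimizer x = (S − (G/2)y)/(G + 2θ) (the best response); (ii) the unique pair (x*, y*) ∈ ℝ² in which each coordinate is the best response to the other is x* = y* = 2S/(3G + 4θ), the Nash equilibrium of the one-period game; and (iii) setting α = 2/(3G + 4θ), one has 1 − 2αG < 1, and 1 − 2αG > 0 if and only if θ > G/4. -/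
/-!
Completing the square, the cost of trading `x` against `y` exceeds the cost of the best response to
`y` by `(G + 2θ) / 2` times the squared distance of `x` from it. Mutual best responses solve a
symmetric 2 × 2 linear system with diagonal entry `G + 2θ` and off-diagonal entry `G / 2`, whose
eigenvalues are their sum `(3G + 4θ) / 2` and their difference `(G + 4θ) / 2`; the right-hand side
is the constant vector `S`, so the solution is `S` divided by the first eigenvalue.
-/

theorem symmetric_linear_system_iff {K : Type*} [Field K] {a b : K}
    (hadd : a + b ≠ 0) (hsub : a - b ≠ 0) (c x y : K) :
    (a * x + b * y = c ∧ a * y + b * x = c) ↔ (x = c / (a + b) ∧ y = c / (a + b)) := by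
  rw [eq_div_iff hadd, eq_div_iff hadd]
  constructor
  · rintro ⟨hx, hy⟩
    have hdiff : (a - b) * (x - y) = 0 := by linear_combination hx - hy
    obtain rfl : x = y := sub_eq_zero.mp ((mul_eq_zero.mp hdiff).resolve_left hsub)
    constructor <;> linear_combination hx
  · rintro ⟨hx, hy⟩
    obtain rfl : x = y := mul_right_cancel₀ hadd (hx.trans hy.symm)
    constructor <;> linear_combination hx

namespace ImpactGame

section Field

variable {K : Type*} [Field K]

/-- The expected one-period cost of trading `x` at price `S` when the opponent trades `y`, with
permanent impact `G` and quadratic temporary cost parameter `θ`. -/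
def cost (G θ S x y : K) : K :=
  (G / 2) * x ^ 2 - S * x + (G / 2) * x * y + θ * x ^ 2

/-- The best response to an opponent's trade `y`: the critical point of `x ↦ cost G θ S x y`, which
minimizes the cost when `0 < G + 2 * θ`. -/
def bestResponse (G θ S y : K) : K :=
  (S - (G / 2) * y) / (G + 2 * θ)

/-- The ratio `α` of the Nash equilibrium trade to the price. -/
def equilibriumRate (G θ : K) : K :=
  2 / (3 * G + 4 * θ)

variable {G θ : K}

theorem eq_bestResponse_iff (h : G + 2 * θ ≠ 0) (S x y : K) :
    x = bestResponse G θ S y ↔ (G + 2 * θ) * x + G / 2 * y = S := by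
  rw [bestResponse, eq_div_iff h, eq_sub_iff_add_eq, mul_comm x]

theorem one_sub_two_mul_equilibriumRate_mul (h : 3 * G + 4 * θ ≠ 0) :
    1 - 2 * equilibriumRate G θ * G = (4 * θ - G) / (3 * G + 4 * θ) := by
  rw [equilibriumRate]
  field_simp
  ring

variable [NeZero (2 : K)]

theorem cost_sub_cost_bestResponse (h : G + 2 * θ ≠ 0) (S x y : K) :
    cost G θ S x y - cost G θ S (bestResponse G θ S y) y =
      (G + 2 * θ) / 2 * (x - bestResponse G θ S y) ^ 2 := by
  have hfirstOrder := (eq_bestResponse_iff h S _ y).mp rfl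
  unfold cost
  field_simp at hfirstOrder ⊢
  linear_combination (x - bestResponse G θ S y) * hfirstOrder

theorem mutual_bestResponse_iff (h : G + 2 * θ ≠ 0) (hadd : 3 * G + 4 * θ ≠ 0)
    (hsub : G + 4 * θ ≠ 0) (S x y : K) :
    (x = bestResponse G θ S y ∧ y = bestResponse G θ S x) ↔
      (x = equilibriumRate G θ * S ∧ y = equilibriumRate G θ * S) := by
  have hsum : G + 2 * θ + G / 2 = (3 * G + 4 * θ) / 2 := by field_simp; ring
  have hdiff : G + 2 * θ - G / 2 = (G + 4 * θ) / 2 := by field_simp; ring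
  have hsolution : S / (G + 2 * θ + G / 2) = equilibriumRate G θ * S := by
    rw [hsum, equilibriumRate, div_div_eq_mul_div, div_mul_eq_mul_div, mul_comm]
  rw [eq_bestResponse_iff h, eq_bestResponse_iff h, ← hsolution]
  exact symmetric_linear_system_iff (hsum ▸ div_ne_zero hadd two_ne_zero)
    (hdiff ▸ div_ne_zero hsub two_ne_zero) S x y

end Field

section OrderedField

variable {K : Type*} [Field K] [LinearOrder K] [IsStrictOrderedRing K] {G θ : K}

theorem cost_bestResponse_lt (h : 0 < G + 2 * θ) {S x y : K} (hx : x ≠ bestResponse G θ S y) :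
    cost G θ S (bestResponse G θ S y) y < cost G θ S x y := by
  rw [← sub_pos, cost_sub_cost_bestResponse h.ne']
  exact mul_pos (half_pos h) (sq_pos_of_ne_zero (sub_ne_zero.mpr hx))

theorem one_sub_two_mul_equilibriumRate_mul_lt_one (hG : 0 < G) (h : 0 < 3 * G + 4 * θ) :
    1 - 2 * equilibriumRate G θ * G < 1 := by
  have hrate : 0 < equilibriumRate G θ := div_pos two_pos h
  exact sub_lt_self 1 (by positivity)

theorem one_sub_two_mul_equilibriumRate_mul_pos_iff (h : 0 < 3 * G + 4 * θ) :
    0 < 1 - 2 * equilibriumRate G θ * G ↔ G / 4 < θ := by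
  rw [one_sub_two_mul_equilibriumRate_mul h.ne', div_pos_iff_of_pos_right h, sub_pos,
    div_lt_iff₀' four_pos]

end OrderedField

end ImpactGame

theorem stmt_19_general {K : Type*} [Field K] [LinearOrder K] [IsStrictOrderedRing K]
    {G θ : K} (S : K) (hG : 0 < G) (hconvex : 0 < G + 2 * θ) (hsub : G + 4 * θ ≠ 0) :
    (∀ y x : K, x ≠ ImpactGame.bestResponse G θ S y →
      ImpactGame.cost G θ S (ImpactGame.bestResponse G θ S y) y < ImpactGame.cost G θ S x y) ∧
    (∀ x y : K, (x = ImpactGame.bestResponse G θ S y ∧ y = ImpactGame.bestResponse G θ S x) ↔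
      (x = ImpactGame.equilibriumRate G θ * S ∧ y = ImpactGame.equilibriumRate G θ * S)) ∧
    (1 - 2 * ImpactGame.equilibriumRate G θ * G < 1 ∧
      (0 < 1 - 2 * ImpactGame.equilibriumRate G θ * G ↔ G / 4 < θ)) := by
  have hadd : 0 < 3 * G + 4 * θ := by linarith
  exact ⟨fun _ _ => ImpactGame.cost_bestResponse_lt hconvex,
    ImpactGame.mutual_bestResponse_iff hconvex.ne' hadd.ne' hsub S,
    ImpactGame.one_sub_two_mul_equilibriumRate_mul_lt_one hG hadd,
    ImpactGame.one_sub_two_mul_equilibriumRate_mul_pos_iff hadd⟩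

/-- Myopic one-period market impact game with cost
`f(x,y) = (G/2)x² − Sx + (G/2)xy + θx²`:
(i) for each `y`, the unique minimizer of `x ↦ f(x,y)` is the best response
`br y = (S − (G/2)y)/(G + 2θ)`;
(ii) the unique mutual best-response pair is `x* = y* = 2S/(3G + 4θ)`;
(iii) with `α = 2/(3G + 4θ)`, one has `1 − 2αG < 1`, and `1 − 2αG > 0 ↔ θ > G/4`. -/
theorem stmt_19 (G θ S : ℝ) (hG : 0 < G) (hθ : 0 < θ)
    (f : ℝ → ℝ → ℝ)
    (hf : ∀ x y : ℝ, f x y = (G/2)*x^2 - S*x + (G/2)*x*y + θ*x^2)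
    (br : ℝ → ℝ) (hbr : ∀ y : ℝ, br y = (S - (G/2)*y)/(G + 2*θ)) :
    (∀ y x : ℝ, x ≠ br y → f (br y) y < f x y) ∧
    (∀ x y : ℝ, (x = br y ∧ y = br x) ↔
      (x = 2*S/(3*G + 4*θ) ∧ y = 2*S/(3*G + 4*θ))) ∧
    (1 - 2*(2/(3*G + 4*θ))*G < 1 ∧ (0 < 1 - 2*(2/(3*G + 4*θ))*G ↔ G/4 < θ)) := by
  obtain rfl : f = ImpactGame.cost G θ S := funext₂ hf
  obtain rfl : br = ImpactGame.bestResponse G θ S := funext hbr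
  simpa only [ImpactGame.equilibriumRate, div_mul_eq_mul_div] using
    stmt_19_general S hG (by positivity : 0 < G + 2 * θ) (by positivity)
end
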